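/- arXiv:1001.0304 — 2 statements merged into one kernel-verified Lean document; each statement's English description precedes it below -/
import Mathlib

section
/- Let $f$ be a monic real polynomial of degree $n \ge 1$ all of whose complex roots have negative real part. Then the constant coefficient of $f$ satisfies $f(0) > 0$, and the $(n-1)$-th leading principal minor $\Delta_{n-1}$ of the Hurwitz matrix of $f$ satisfies $\Delta_{n-1} > 0$. -/
/-!
Call a real polynomial stable if its leading coefficient is positive and its roots lie in the open
left half-plane. Positivity of `f(0)` is the intermediate value theorem: a stable polynomial has no
root on `[0, ∞)` and is positive near `+∞`.

For the minor `Δ_{n-1}`, the key fact is that it never vanishes on stable polynomials of degree `n`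
(`Stable.det_hurwitzBlock_ne_zero`). A linear relation between the rows of the `(n-1) × (n-1)`
block is a polynomial `V` of degree at most `n - 2` such that `V f` is even, that is
`V(x) f(x) = V(-x) f(-x)`. Since `f(x)` and `f(-x)` have no common root, `f` divides `V(-x)`, hence
`V = 0`.

The sign is then constant along paths of stable polynomials, which gives an induction on the degree
over the real linear and quadratic factors of `f`. The path `g (1 + t c x)`, `0 ≤ t ≤ 1`, degenerates
at `t = 0` to `g`, viewed in formal degree one higher, where the minor equals the leading
coefficient of `g` times its own minor (`det_hurwitzBlock_succ`); so multiplying `g` by `1 + c x`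
preserves positivity (`Stable.det_pos_mul_linear`). A quadratic factor `x² + b x + c` is joined by
a segment to `(1 + x)²` (`Stable.det_pos_mul_quadratic`).
-/

open Polynomial Matrix

/-- The `n × n` Hurwitz matrix of a real polynomial `f = a_n x^n + ⋯ + a_0`:
its `(i,j)` entry (with `1`-based indices) is `a_{n - 2j + i}`, with the convention
that `a_k = 0` for `k < 0` or `k > n`. Here `i j : Fin n` are `0`-based. -/
noncomputable def hurwitzMatrix (n : ℕ) (f : Polynomial ℝ) : Matrix (Fin n) (Fin n) ℝ :=
  fun i j =>
    let e : ℤ := (n : ℤ) - 2 * ((j : ℕ) + 1) + ((i : ℕ) + 1)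
    if 0 ≤ e ∧ e ≤ (n : ℤ) then f.coeff e.toNat else 0

/-- The `k`-th leading principal minor of a square matrix. -/
noncomputable def leadingPrincipalMinor {n : ℕ} (M : Matrix (Fin n) (Fin n) ℝ)
    (k : ℕ) (hk : k ≤ n) : ℝ :=
  (M.submatrix (Fin.castLE hk) (Fin.castLE hk)).det

/-- A real polynomial is *stable* when its leading coefficient is positive and all its complex
roots lie in the open left half-plane. -/
def Stable (f : ℝ[X]) : Prop :=
  0 < f.leadingCoeff ∧ ∀ z : ℂ, aeval z f = 0 → z.re < 0

/-- The `m × m` leading block of the Hurwitz matrix of `f`, where `f` is regarded as a polynomial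
of formal degree `m + 1`: in `0`-based indices its `(i, j)` entry is `a_{m - 2j + i}`. The actual
degree of `f` may be smaller than `m + 1`. -/
noncomputable def hurwitzBlock (m : ℕ) (f : ℝ[X]) : Matrix (Fin m) (Fin m) ℝ :=
  Matrix.of fun i j => if 2 * (j : ℕ) ≤ m + i then f.coeff (m + i - 2 * j) else 0

namespace Stable

lemma ne_zero {f : ℝ[X]} (hf : Stable f) : f ≠ 0 := by
  rintro rfl
  simpa using hf.1

lemma mul {f g : ℝ[X]} (hf : Stable f) (hg : Stable g) : Stable (f * g) := by
  refine ⟨by rw [leadingCoeff_mul]; exact mul_pos hf.1 hg.1, fun z hz => ?_⟩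
  rw [map_mul, mul_eq_zero] at hz
  exact hz.elim (hf.2 z) (hg.2 z)

lemma of_mul {f g : ℝ[X]} (h : Stable (f * g)) (hf : 0 < f.leadingCoeff) :
    Stable f ∧ Stable g := by
  have h1 := h.1
  rw [leadingCoeff_mul] at h1
  exact ⟨⟨hf, fun z hz => h.2 z (by simp [hz])⟩,
    ⟨pos_of_mul_pos_right h1 hf.le, fun z hz => h.2 z (by simp [hz])⟩⟩

lemma eval_zero_pos {f : ℝ[X]} (hf : Stable f) : 0 < f.eval 0 := by
  rcases Nat.eq_zero_or_pos f.natDegree with h0 | hpos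
  · rw [← coeff_zero_eq_eval_zero]
    simpa [leadingCoeff, h0] using hf.1
  by_contra! hneg
  have ht := f.tendsto_atTop_of_leadingCoeff_nonneg (natDegree_pos_iff_degree_pos.1 hpos) hf.1.le
  obtain ⟨x, hx, hx0⟩ :=
    ((ht.eventually_ge_atTop 0).and (Filter.eventually_ge_atTop 0)).exists
  obtain ⟨y, hy, hy0⟩ := intermediate_value_Icc hx0 f.continuous.continuousOn ⟨hneg, hx⟩
  have := hf.2 (y : ℂ) (by
    have := aeval_algebraMap_apply ℂ y f
    simp only [Complex.coe_algebraMap] at this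
    rw [this]
    simp only [coe_aeval_eq_eval] at hy0 ⊢
    simp [hy0])
  simp only [Complex.ofReal_re] at this
  exact absurd hy.1 (not_le.2 this)

lemma one_add_C_mul_X {c : ℝ} (hc : 0 < c) : Stable (1 + C c * X) := by
  have hl : (1 + C c * X : ℝ[X]) = C c * X + C 1 := by simp [add_comm]
  refine ⟨by rw [hl, leadingCoeff_linear hc.ne']; exact hc, fun z hz => ?_⟩
  have h := congrArg Complex.re hz
  simp at h
  by_contra! hz0
  nlinarith [mul_nonneg hc.le hz0]

lemma quadratic {b c : ℝ} (hb : 0 < b) (hc : 0 < c) : Stable (X ^ 2 + C b * X + C c) := by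
  refine ⟨by rw [(isMonicOfDegree_add_add_two b c).leadingCoeff_eq]; exact one_pos,
    fun z hz => ?_⟩
  by_contra! hz0
  have h1 := congrArg Complex.re hz
  have h2 := congrArg Complex.im hz
  simp [pow_two] at h1 h2
  -- The imaginary part reads `im z * (2 * re z + b) = 0`, so `z` is real.
  have him : z.im = 0 := by
    have : z.im * (2 * z.re + b) = 0 := by linarith
    rcases mul_eq_zero.1 this with h | h
    · exact h
    · linarith
  rw [him] at h1
  nlinarith [mul_nonneg hb.le hz0, mul_self_nonneg z.re]

lemma coeffs_pos_of_quadratic {b c : ℝ} (h : Stable (X ^ 2 + C b * X + C c)) :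
    0 < b ∧ 0 < c := by
  refine ⟨?_, by simpa using h.eval_zero_pos⟩
  have hdeg := (isMonicOfDegree_add_add_two b c).natDegree_eq
  obtain ⟨z, hz⟩ := IsAlgClosed.exists_aeval_eq_zero ℂ (X ^ 2 + C b * X + C c) (by
    intro h0
    rw [natDegree_eq_zero_iff_degree_le_zero.2 h0.le] at hdeg
    omega)
  -- By Vieta, the second root is `-b - z`.
  have hw : aeval (-(b : ℂ) - z) (X ^ 2 + C b * X + C c : ℝ[X]) = 0 := by
    rw [← hz]
    simp
    ring
  have h1 := h.2 z hz
  have h2 := h.2 _ hw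
  simp at h2
  linarith

/-- A stable polynomial has no root in common with its reflection `f(-x)`. -/
lemma isCoprime_comp_neg_X {f : ℝ[X]} (hf : Stable f) : IsCoprime f (f.comp (-X)) := by
  rw [isCoprime_iff_aeval_ne_zero_of_isAlgClosed ℝ ℂ]
  intro z
  by_contra! h
  have h1 := hf.2 z h.1
  have h2 := hf.2 (-z) (by simpa [aeval_comp] using h.2)
  simp at h2
  linarith

end Stable

/-- If the rows of the block satisfy a linear relation with coefficients `v`, then with
`V = ∑ v_i x^{m-1-i}` every odd coefficient of `V * f` vanishes, i.e. `V(x) f(x) = V(-x) f(-x)`.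
As `f(x)` and `f(-x)` are coprime, `f` divides `V(-x)`, which has too small a degree. -/
lemma Stable.det_hurwitzBlock_ne_zero {m : ℕ} {f : ℝ[X]} (hf : Stable f)
    (hdeg : f.natDegree = m + 1) : (hurwitzBlock m f).det ≠ 0 := by
  intro hdet
  obtain ⟨v, hv, hv0⟩ := Matrix.exists_vecMul_eq_zero_iff.2 hdet
  set V : ℝ[X] := ∑ i : Fin m, C (v i) * X ^ (m - 1 - (i : ℕ)) with hV
  have hVdeg : V.natDegree ≤ m - 1 := natDegree_sum_le_of_forall_le _ _ fun i _ =>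
    (natDegree_C_mul_X_pow_le _ _).trans (Nat.sub_le _ _)
  have hVcoeff (i : Fin m) : V.coeff (m - 1 - i) = v i := by
    rw [hV, finsetSum_coeff, Finset.sum_eq_single i]
    · simp
    · intro j _ hj
      have : (m - 1 - (i : ℕ)) ≠ m - 1 - j := by
        have := Fin.val_ne_of_ne hj
        omega
      simp [coeff_X_pow, this]
    · simp
  have hodd (k : ℕ) (hk : Odd k) : (V * f).coeff k = 0 := by
    obtain ⟨l, rfl⟩ := hk
    rcases lt_or_ge l m with hl | hl
    · -- This coefficient is the entry `j = m - 1 - l` of the relation `v ᵥ* hurwitzBlock m f = 0`.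
      have h := congrFun hv0 ⟨m - 1 - l, by omega⟩
      simp only [Matrix.vecMul, dotProduct, Pi.zero_apply, hurwitzBlock, Matrix.of_apply] at h
      rw [← h, hV, Finset.sum_mul, finsetSum_coeff]
      refine Finset.sum_congr rfl fun i _ => ?_
      rw [mul_assoc, coeff_C_mul, coeff_X_pow_mul']
      have hi := i.2
      by_cases hc : m - 1 - (i : ℕ) ≤ 2 * l + 1
      · rw [if_pos hc, if_pos (by omega)]
        congr 2
        omega
      · rw [if_neg hc, if_neg (by omega)]
    · refine coeff_eq_zero_of_natDegree_lt (natDegree_mul_le.trans_lt ?_)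
      have : m ≠ 0 := by
        rintro rfl
        exact hv (Subsingleton.elim _ _)
      omega
  have heven : V * f = V.comp (-X) * f.comp (-X) := by
    rw [← mul_comp]
    ext k
    have : (-X : ℝ[X]) = C (-1) * X := by simp
    rw [this, comp_C_mul_X_coeff]
    rcases Nat.even_or_odd k with hk | hk
    · simp [hk.neg_one_pow]
    · simp [hodd k hk]
  have hdvd : f ∣ V.comp (-X) :=
    hf.isCoprime_comp_neg_X.dvd_of_dvd_mul_right ⟨V, by rw [← heven, mul_comm]⟩
  have hzero : V.comp (-X) = 0 := eq_zero_of_dvd_of_natDegree_lt hdvd (by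
    rw [natDegree_comp]
    simp
    omega)
  have hV0 : V = 0 := by
    rw [← comp_neg_X_comp_neg_X V, hzero, zero_comp]
  apply hv
  ext i
  rw [← hVcoeff i, hV0]
  simp

/-- Along the segment from `P` to `P + Q` the determinant is continuous, so it keeps its sign as
long as it does not vanish. -/
lemma det_hurwitzBlock_pos_of_path {m : ℕ} {P Q : ℝ[X]} (h0 : 0 < (hurwitzBlock m P).det)
    (h : ∀ t : ℝ, 0 < t → t ≤ 1 → (hurwitzBlock m (P + C t * Q)).det ≠ 0) :
    0 < (hurwitzBlock m (P + Q)).det := by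
  have hcont : Continuous fun t : ℝ => (hurwitzBlock m (P + C t * Q)).det := by
    refine Continuous.matrix_det (continuous_matrix fun i j => ?_)
    simp only [hurwitzBlock, Matrix.of_apply, coeff_add, coeff_C_mul]
    split_ifs <;> fun_prop
  by_contra! hneg
  obtain ⟨t, ht, ht0⟩ := intermediate_value_Icc' (zero_le_one' ℝ) hcont.continuousOn
    (show (0 : ℝ) ∈ _ by simpa using ⟨hneg, h0.le⟩)
  rcases ht.1.eq_or_lt with rfl | hpos
  · simp at ht0
    exact h0.ne' ht0
  · exact h t hpos ht.2 ht0

/-- Raising the formal degree by one above the true degree `m + 1` prepends a column whose only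
nonzero entry is the leading coefficient, at the top. -/
lemma det_hurwitzBlock_succ {m : ℕ} {f : ℝ[X]} (hdeg : f.natDegree = m + 1) :
    (hurwitzBlock (m + 1) f).det = f.leadingCoeff * (hurwitzBlock m f).det := by
  rw [Matrix.det_succ_column_zero, Fin.sum_univ_succ, Finset.sum_eq_zero, add_zero]
  · have h1 : hurwitzBlock (m + 1) f 0 0 = f.leadingCoeff := by
      simp [hurwitzBlock, leadingCoeff, hdeg]
    have h2 : (hurwitzBlock (m + 1) f).submatrix (Fin.succAbove 0) Fin.succ =
        hurwitzBlock m f := by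
      ext i j
      simp only [hurwitzBlock, Matrix.submatrix_apply, Matrix.of_apply, Fin.succAbove_zero,
        Fin.val_succ]
      by_cases hc : 2 * (j : ℕ) ≤ m + i
      · rw [if_pos hc, if_pos (by omega)]
        congr 1
        omega
      · rw [if_neg hc, if_neg (by omega)]
    rw [h1, h2]
    simp
  · intro i _
    have : hurwitzBlock (m + 1) f i.succ 0 = 0 := by
      simp only [hurwitzBlock, Matrix.of_apply, Fin.val_succ, Fin.val_zero, mul_zero, zero_le,
        if_true, Nat.sub_zero]
      exact coeff_eq_zero_of_natDegree_lt (by omega)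
    rw [this]
    simp

lemma det_hurwitzBlock_C_mul (m : ℕ) (r : ℝ) (f : ℝ[X]) :
    (hurwitzBlock m (C r * f)).det = r ^ m * (hurwitzBlock m f).det := by
  have : hurwitzBlock m (C r * f) = r • hurwitzBlock m f := by
    ext i j
    simp [hurwitzBlock]
  rw [this, Matrix.det_smul, Fintype.card_fin]

/-- Deform `g` to `g * (1 + c x)` through `g * (1 + t c x)`; at `t = 0` the degree drops by one
and `det_hurwitzBlock_succ` applies. -/
lemma Stable.det_pos_mul_linear {g : ℝ[X]} (hg : Stable g)
    (hpos : 0 < (hurwitzBlock (g.natDegree - 1) g).det) {c : ℝ} (hc : 0 < c) :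
    0 < (hurwitzBlock g.natDegree (g * (1 + C c * X))).det := by
  rcases hd : g.natDegree with _ | m
  · simp
  rw [hd, Nat.add_sub_cancel] at hpos
  have hexp : g * (1 + C c * X) = g + C c * X * g := by ring
  rw [hexp]
  refine det_hurwitzBlock_pos_of_path ?_ fun t ht _ => ?_
  · rw [det_hurwitzBlock_succ hd]
    exact mul_pos hg.1 hpos
  · have hl : (1 + C (t * c) * X : ℝ[X]) = C (t * c) * X + C 1 := by simp [add_comm]
    have hs := Stable.one_add_C_mul_X (mul_pos ht hc)
    have heq : g + C t * (C c * X * g) = g * (1 + C (t * c) * X) := by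
      rw [C_mul]
      ring
    rw [heq]
    refine (hg.mul hs).det_hurwitzBlock_ne_zero ?_
    rw [natDegree_mul hg.ne_zero hs.ne_zero, hd, hl, natDegree_linear (mul_pos ht hc).ne']

/-- Multiply by `1 + x` twice, then deform `(1 + x)²` linearly to `x² + b x + c`. -/
lemma Stable.det_pos_mul_quadratic {g : ℝ[X]} (hg : Stable g)
    (hpos : 0 < (hurwitzBlock (g.natDegree - 1) g).det) {b c : ℝ} (hb : 0 < b) (hc : 0 < c) :
    0 < (hurwitzBlock (g.natDegree + 1) (g * (X ^ 2 + C b * X + C c))).det := by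
  have hs := Stable.one_add_C_mul_X one_pos
  have hl : (1 + C 1 * X : ℝ[X]) = C 1 * X + C 1 := by simp [add_comm]
  have hd1 : (g * (1 + C 1 * X)).natDegree = g.natDegree + 1 := by
    rw [natDegree_mul hg.ne_zero hs.ne_zero, hl, natDegree_linear one_ne_zero]
  have h1 := hg.det_pos_mul_linear hpos one_pos
  have h2 := (hg.mul hs).det_pos_mul_linear (by rwa [hd1, Nat.add_sub_cancel]) one_pos
  rw [hd1] at h2
  have hexp : g * (X ^ 2 + C b * X + C c) =
      g * (1 + C 1 * X) * (1 + C 1 * X) + g * (C (b - 2) * X + C (c - 1)) := by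
    simp only [C_sub, C_1, map_ofNat]
    ring
  rw [hexp]
  refine det_hurwitzBlock_pos_of_path h2 fun t ht ht1 => ?_
  have heq : g * (1 + C 1 * X) * (1 + C 1 * X) + C t * (g * (C (b - 2) * X + C (c - 1))) =
      g * (X ^ 2 + C (2 + t * (b - 2)) * X + C (1 + t * (c - 1))) := by
    simp only [C_sub, C_1, map_ofNat, C_add, C_mul]
    ring
  have hq := Stable.quadratic (b := 2 + t * (b - 2)) (c := 1 + t * (c - 1))
    (by nlinarith) (by nlinarith)
  rw [heq]
  refine (hg.mul hq).det_hurwitzBlock_ne_zero ?_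
  rw [natDegree_mul hg.ne_zero hq.ne_zero, (isMonicOfDegree_add_add_two _ _).natDegree_eq]

/-- Induction on the degree, splitting off a real factor of degree one or two. -/
lemma Stable.det_hurwitzBlock_pos (n : ℕ) : ∀ f : ℝ[X], Stable f → f.Monic → f.natDegree = n →
    0 < (hurwitzBlock (n - 1) f).det := by
  induction n using Nat.strong_induction_on with
  | _ n ih =>
    intro f hf hm hn
    rcases n with _ | n
    · simp
    obtain ⟨q, g, hq, rfl⟩ :=
      IsMonicOfDegree.eq_isMonicOfDegree_one_or_two_mul (n := n) ⟨hn, hm⟩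
    have hqm : q.Monic := hq.elim (·.monic) (·.monic)
    have hgm : g.Monic := hqm.of_mul_monic_left hm
    obtain ⟨hqs, hgs⟩ := hf.of_mul (by rw [hqm.leadingCoeff]; exact one_pos)
    rw [hqm.natDegree_mul hgm] at hn
    rcases hq with hq | hq
    · rw [hq.natDegree_eq] at hn
      obtain ⟨r, rfl⟩ := isMonicOfDegree_one_iff.1 hq
      have hr : 0 < r := by simpa using hqs.eval_zero_pos
      have h := hgs.det_pos_mul_linear (ih _ (by omega) g hgs hgm rfl) (inv_pos.2 hr)
      have heq : (X + C r) * g = C r * (g * (1 + C r⁻¹ * X)) := by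
        have hC : C r * C r⁻¹ = (1 : ℝ[X]) := by
          rw [← C_mul, mul_inv_cancel₀ hr.ne', C_1]
        linear_combination (-X * g) * hC
      rw [heq, show n + 1 - 1 = g.natDegree by omega, det_hurwitzBlock_C_mul]
      exact mul_pos (pow_pos hr _) h
    · rw [hq.natDegree_eq] at hn
      obtain ⟨b, c, rfl⟩ := isMonicOfDegree_two_iff.1 hq
      obtain ⟨hb, hc⟩ := hqs.coeffs_pos_of_quadratic
      have h := hgs.det_pos_mul_quadratic (ih _ (by omega) g hgs hgm rfl) hb hc
      rw [mul_comm, show n + 1 - 1 = g.natDegree + 1 by omega]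
      exact h

/-- If `f` is a monic real polynomial of degree `n ≥ 1` all of whose complex roots have
negative real part, then `f(0) > 0` and the `(n-1)`-th leading principal minor of the
Hurwitz matrix of `f` is positive. -/
theorem stable_poly_minors_pos (n : ℕ) (hn : 1 ≤ n) (f : Polynomial ℝ)
    (hmonic : f.Monic) (hdeg : f.natDegree = n)
    (hroots : ∀ μ : ℂ, (f.map (algebraMap ℝ ℂ)).IsRoot μ → μ.re < 0) :
    0 < f.eval 0 ∧
      0 < leadingPrincipalMinor (hurwitzMatrix n f) (n - 1) (Nat.sub_le n 1) := by
  have hs : Stable f := by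
    refine ⟨by rw [hmonic.leadingCoeff]; exact one_pos, fun z hz => hroots z ?_⟩
    rw [IsRoot, eval_map_algebraMap, hz]
  refine ⟨hs.eval_zero_pos, ?_⟩
  have h := Stable.det_hurwitzBlock_pos n f hs hmonic hdeg
  have heq : (hurwitzMatrix n f).submatrix (Fin.castLE (Nat.sub_le n 1))
      (Fin.castLE (Nat.sub_le n 1)) = hurwitzBlock (n - 1) f := by
    ext i j
    simp only [hurwitzMatrix, hurwitzBlock, Matrix.submatrix_apply, Matrix.of_apply,
      Fin.val_castLE]
    by_cases hc : 2 * (j : ℕ) ≤ n - 1 + i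
    · rw [if_pos hc]
      split_ifs with he
      · congr 1
        omega
      · -- An index above `n` gives a zero coefficient.
        exact (coeff_eq_zero_of_natDegree_lt (by omega)).symm
    · rw [if_neg hc, if_neg (by omega)]
  rwa [leadingPrincipalMinor, heq]
end

section
/- Let $m \ge 2$ and let $f \in \mathbb{Z}[x_1,\ldots,x_m]$ be a nonzero homogeneous polynomial of degree $d \ge 1$ whose coefficients all have absolute value at most $M$, where $M \ge 2$ is an integer. Then $f(x) > 0$ for all $x \in S_m$ if and only if there exists a nonnegative integer $k$ with $k \le C_p(M,m,d)$ such that every form in the $k$-th weighted difference substitution set $\mathrm{wds}^{(k)}(f)$ has complete monomials with all positive coefficients, where $C_p(M,m,d) = \left\lfloor \dfrac{\ln\left(2^{d^m} M^{d^m+1} m^{d^{m+1}+d} d^{(m+1)d + m d^m} (d+1)^{(m-1)(m+2)}\right)}{\ln m - \ln(m-1)} \right\rfloor + 2.$ -/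
/-!
Positivity of all coefficients of the substituted forms implies positivity of `f`, because sorting
the coordinates of a point of the simplex writes it as the image of a point of the simplex under a
WDS matrix (`exists_WDSprod_preimage`), and a form with positive coefficients is positive on the
simplex.

For the converse two estimates are combined.

* *The minimum of `f` is not too small* (`min_lower_bound`). Let `μ` be the minimum of `f` on the
  simplex. Minimizers of the perturbation `f + ε ∑ xᵢ^(d+1)/(d+1)` satisfy, by Lagrange, the
  equations `xᵢᵈ = u (τ - ∂ᵢf)` on their support, `xᵢ = 0` off it, and `∑ xᵢ = 1`, with `u = 1/ε`;
  Euler's identity shows `τ → d μ` as `ε → 0`. These equations allow every monomial to be rewritten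
  over `ℤ[τ][u]` in terms of the `dᵐ` monomials with exponents `< d`, so the determinant of
  multiplication by `∑ xᵢ - 1` on these is a polynomial in `ℤ[τ][u]` that vanishes at `(u, τ)`
  (`exists_eliminant`). It is nonzero since it is so at `u = 0`, and weighting monomials by degree
  bounds its `ℓ¹` norm by `(m (dᵐ M d + 1) + 1)^(dᵐ)`. Letting `u → ∞`, its leading coefficient in
  `u` vanishes at `τ = d μ`; a positive root of a nonzero integer polynomial is at least the
  reciprocal of its `ℓ¹` norm (`root_lower_bound`).

* *WDS products contract* (`WDSprod_props`). A WDS matrix is column stochastic and has a row all of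
  whose entries are at least `1/m`, so the entries of each row of a product of `k` of them differ by
  at most `(1 - 1/m)^k`. Hence the coefficients of `f(Bx)` are close to those of `f(b) (∑ xⱼ)^d`,
  where `b` is a column of the product `B`; they are positive once `f(b)` exceeds the error
  (`coeff_linSubst_pos`).

The exponent `k = ⌊log Z / (log m - log (m - 1))⌋ + 1`, with `Z` the argument of the logarithm in
`C_p(M, m, d)`, makes `(1 - 1/m)^k < 1/Z`, which is precise enough.
-/

open Matrix

/-- The upper-triangular matrix `T_m` whose `(i,j)` entry (with `1`-based indices)
is `1/j` when `i ≤ j` and `0` otherwise. -/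
noncomputable def Tmat (m : ℕ) : Matrix (Fin m) (Fin m) ℝ :=
  fun i j => if i ≤ j then 1 / ((j : ℕ) + 1) else 0

/-- The permutation matrix of `θ`: its `(i,j)` entry is `1` if `j = θ i` and `0` otherwise. -/
def permMat {m : ℕ} (θ : Equiv.Perm (Fin m)) : Matrix (Fin m) (Fin m) ℝ :=
  fun i j => if θ i = j then 1 else 0

/-- The weighted difference substitution (WDS) matrix `A_θ = P_θ T_m`. -/
noncomputable def WDSmat {m : ℕ} (θ : Equiv.Perm (Fin m)) : Matrix (Fin m) (Fin m) ℝ :=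
  permMat θ * Tmat m

/-- Substitution of the linear change of variables `x = B y` into a multivariate
polynomial: each variable `xᵢ` is replaced by `∑ⱼ B i j * yⱼ`. -/
noncomputable def linSubst {m : ℕ} (B : Matrix (Fin m) (Fin m) ℝ)
    (f : MvPolynomial (Fin m) ℝ) : MvPolynomial (Fin m) ℝ :=
  MvPolynomial.bind₁ (fun i => ∑ j, MvPolynomial.C (B i j) * MvPolynomial.X j) f

/-- The product `A_{θ k} ⋯ A_{θ 1}` of the WDS matrices of a sequence of permutations. -/
noncomputable def WDSprod {m k : ℕ} (θ : Fin k → Equiv.Perm (Fin m)) :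
    Matrix (Fin m) (Fin m) ℝ :=
  (List.ofFn fun i => WDSmat (θ i)).prod

/-! ### `ℓ¹` norms and root bounds -/

open Polynomial in
/-- The `ℓ¹` seminorm on `A[X]` built from a ring seminorm `w` on the coefficients:
the sum of the values of `w` on all coefficients. -/
noncomputable def l1Seminorm {A : Type*} [CommRing A] (w : RingSeminorm A) :
    RingSeminorm (Polynomial A) where
  toFun p := p.sum fun _ a => w a
  map_zero' := by simp
  add_le' p q := by
    classical
    have h0 : ∀ n : ℕ, (fun (_ : ℕ) (a : A) => w a) n 0 = 0 := fun _ => map_zero w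
    have key : ∀ r : A[X], ∀ N, r.natDegree < N →
        (r.sum fun _ a => w a) = ∑ i ∈ Finset.range N, w (r.coeff i) := fun r N h =>
      r.sum_over_range' h0 N h
    set N := max (p + q).natDegree (max p.natDegree q.natDegree) + 1
    rw [key _ N (by omega), key p N (by omega), key q N (by omega), ← Finset.sum_add_distrib]
    exact Finset.sum_le_sum fun i _ => by rw [coeff_add]; exact map_add_le_add w _ _
  neg' p := by
    simp only [Polynomial.sum_def, support_neg, coeff_neg, map_neg_eq_map]
  mul_le' p q := by
    classical
    have h0 : ∀ n : ℕ, (fun (_ : ℕ) (a : A) => w a) n 0 = 0 := fun _ => map_zero w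
    have key : ∀ r : A[X], ∀ N, r.natDegree < N →
        (r.sum fun _ a => w a) = ∑ i ∈ Finset.range N, w (r.coeff i) := fun r N h =>
      r.sum_over_range' h0 N h
    have hN : (p * q).natDegree ≤ p.natDegree + q.natDegree := natDegree_mul_le
    rw [key _ (p.natDegree + q.natDegree + 1) (by omega), Polynomial.sum_def, Polynomial.sum_def,
      Finset.sum_mul_sum, ← Finset.sum_product']
    set N := p.natDegree + q.natDegree + 1
    -- group the products `p_a q_b` by the exponent `a + b`
    rw [← Finset.sum_fiberwise_of_maps_to (t := Finset.range N) (g := fun x : ℕ × ℕ => x.1 + x.2)]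
    · refine Finset.sum_le_sum fun n _ => ?_
      have hc : (p * q).coeff n = ∑ x ∈ p.support ×ˢ q.support with x.1 + x.2 = n,
          p.coeff x.1 * q.coeff x.2 := by
        rw [coeff_mul]
        symm
        refine Finset.sum_subset (fun x hx => ?_) (fun x hx hx' => ?_)
        · simp only [Finset.mem_filter] at hx
          simpa using hx.2
        · by_contra hne
          apply hx'
          simp only [Finset.mem_filter, Finset.mem_product, mem_support_iff]
          exact ⟨⟨left_ne_zero_of_mul hne, right_ne_zero_of_mul hne⟩, by simpa using hx⟩
      rw [hc]
      refine (Finset.le_sum_of_subadditive w (map_zero w).le (map_add_le_add w) _ _).trans ?_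
      exact Finset.sum_le_sum fun x _ => map_mul_le_mul w _ _
    · intro x hx
      simp only [Finset.mem_product] at hx
      have h1 := le_natDegree_of_mem_supp _ hx.1
      have h2 := le_natDegree_of_mem_supp _ hx.2
      simp only [Finset.mem_range, N]
      omega

lemma l1Seminorm_apply {A : Type*} [CommRing A] (w : RingSeminorm A) (p : Polynomial A) :
    l1Seminorm w p = ∑ n ∈ p.support, w (p.coeff n) := rfl

lemma l1Seminorm_monomial {A : Type*} [CommRing A] (w : RingSeminorm A) (n : ℕ) (a : A) :
    l1Seminorm w (Polynomial.monomial n a) = w a :=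
  Polynomial.sum_monomial_index a _ (map_zero w)

lemma l1Seminorm_C {A : Type*} [CommRing A] (w : RingSeminorm A) (a : A) :
    l1Seminorm w (Polynomial.C a) = w a :=
  l1Seminorm_monomial w 0 a

lemma l1Seminorm_X {A : Type*} [CommRing A] (w : RingSeminorm A) :
    l1Seminorm w Polynomial.X = w 1 :=
  l1Seminorm_monomial w 1 1

lemma le_l1Seminorm {A : Type*} [CommRing A] (w : RingSeminorm A) (p : Polynomial A) (n : ℕ) :
    w (p.coeff n) ≤ l1Seminorm w p := by
  by_cases h : n ∈ p.support
  · rw [l1Seminorm_apply]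
    exact Finset.single_le_sum (f := fun n => w (p.coeff n)) (fun i _ => apply_nonneg w _) h
  · rw [Polynomial.notMem_support_iff.1 h, map_zero]
    exact apply_nonneg _ _

/-- The ring `ℤ[τ][u]` of integer polynomials in the Lagrange multiplier `τ` (inner variable) and
the inverse `u = 1/ε` of the perturbation parameter (outer variable). -/
abbrev UT := Polynomial (Polynomial ℤ)

/-- The `ℓ¹` seminorm on `ℤ[τ]`. -/
noncomputable def nuT : RingSeminorm (Polynomial ℤ) := l1Seminorm (normRingSeminorm ℤ)

/-- The `ℓ¹` seminorm on `ℤ[τ][u]`. -/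
noncomputable def nu : RingSeminorm UT := l1Seminorm nuT

/-- Evaluation of an element of `ℤ[τ][u]` at real numbers `u` and `τ`. -/
noncomputable def evUT (u t : ℝ) : UT →+* ℝ :=
  Polynomial.eval₂RingHom (Polynomial.eval₂RingHom (Int.castRingHom ℝ) t) u

lemma normRingSeminorm_int (a : ℤ) : normRingSeminorm ℤ a = |(a : ℝ)| := Int.norm_eq_abs a

lemma nuT_one : nuT 1 = 1 := by
  have := l1Seminorm_C (normRingSeminorm ℤ) 1
  rw [map_one] at this
  rw [nuT, this]
  simp [normRingSeminorm_int]

lemma nu_one : nu 1 = 1 := by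
  have := l1Seminorm_C nuT 1
  rw [map_one] at this
  rw [nu, this, nuT_one]

lemma nu_int (a : ℤ) : nu (a : UT) = |(a : ℝ)| := by
  have h : (a : UT) = Polynomial.C (Polynomial.C a) := by simp
  rw [h, nu, l1Seminorm_C, nuT, l1Seminorm_C]
  simp [normRingSeminorm_int]

lemma nu_X : nu Polynomial.X = 1 := by rw [nu, l1Seminorm_X, nuT_one]

lemma nu_CX : nu (Polynomial.C Polynomial.X) = 1 := by
  rw [nu, l1Seminorm_C, nuT, l1Seminorm_X]
  simp [normRingSeminorm_int]

/-- A positive real root `t` of a nonzero integer polynomial is at least the reciprocal of the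
`ℓ¹` norm: compare the trailing term with the rest. -/
lemma root_lower_bound (q : Polynomial ℤ) (hq : q ≠ 0) (t : ℝ) (ht : 0 < t)
    (hr : q.eval₂ (Int.castRingHom ℝ) t = 0) (B : ℝ) (hB : nuT q ≤ B) : 1 ≤ B * t := by
  classical
  have hnorm : nuT q = ∑ n ∈ q.support, |(q.coeff n : ℝ)| := by
    rw [nuT, l1Seminorm_apply]
    simp [normRingSeminorm_int]
  set b := q.natTrailingDegree with hb
  have hbm : b ∈ q.support := Polynomial.natTrailingDegree_mem_support_of_nonzero hq
  have hc1 : (1 : ℝ) ≤ |(q.coeff b : ℝ)| := by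
    have : q.coeff b ≠ 0 := Polynomial.mem_support_iff.1 hbm
    exact_mod_cast Int.one_le_abs this
  have hsplit : |(q.coeff b : ℝ)| + ∑ n ∈ q.support.erase b, |(q.coeff n : ℝ)| = nuT q := by
    rw [hnorm, Finset.add_sum_erase _ (fun n => |(q.coeff n : ℝ)|) hbm]
  have hB1 : 1 ≤ B := by
    have : 0 ≤ ∑ n ∈ q.support.erase b, |(q.coeff n : ℝ)| :=
      Finset.sum_nonneg fun _ _ => abs_nonneg _
    linarith
  rcases le_or_gt 1 t with h1 | h1
  · nlinarith
  have hev : (q.coeff b : ℝ) * t ^ b + ∑ n ∈ q.support.erase b, (q.coeff n : ℝ) * t ^ n = 0 := by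
    rw [Finset.add_sum_erase _ (fun n => (q.coeff n : ℝ) * t ^ n) hbm, ← hr,
      Polynomial.eval₂_eq_sum, Polynomial.sum_def]
    simp
  have hle : |∑ n ∈ q.support.erase b, (q.coeff n : ℝ) * t ^ n| ≤
      (∑ n ∈ q.support.erase b, |(q.coeff n : ℝ)|) * t ^ (b + 1) := by
    rw [Finset.sum_mul]
    refine (Finset.abs_sum_le_sum_abs _ _).trans (Finset.sum_le_sum fun n hn => ?_)
    rw [abs_mul, abs_of_pos (pow_pos ht n)]
    have hbn : b + 1 ≤ n := by
      have h2 := Polynomial.natTrailingDegree_le_of_mem_supp n (Finset.mem_of_mem_erase hn)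
      have h3 := Finset.ne_of_mem_erase hn
      omega
    exact mul_le_mul_of_nonneg_left (pow_le_pow_of_le_one ht.le h1.le hbn) (abs_nonneg _)
  have hbt : 0 < t ^ b := pow_pos ht b
  have h4 : |(q.coeff b : ℝ)| * t ^ b =
      |∑ n ∈ q.support.erase b, (q.coeff n : ℝ) * t ^ n| := by
    rw [eq_neg_of_add_eq_zero_right hev, abs_neg, abs_mul, abs_of_pos hbt]
  have h5 : 1 * t ^ b ≤ (B * t) * t ^ b := by
    have h6 : ∑ n ∈ q.support.erase b, |(q.coeff n : ℝ)| ≤ B := by linarith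
    calc 1 * t ^ b ≤ |(q.coeff b : ℝ)| * t ^ b := by gcongr
      _ ≤ (∑ n ∈ q.support.erase b, |(q.coeff n : ℝ)|) * t ^ (b + 1) := h4 ▸ hle
      _ ≤ B * t ^ (b + 1) := by gcongr
      _ = (B * t) * t ^ b := by ring
  exact le_of_mul_le_mul_right h5 hbt

/-- If `P(n, τₙ) = 0` for infinitely many `n` and `τₙ → t > 0`, then the coefficient of the highest
power of `u` in `P` vanishes at `t`, which bounds `t` from below. -/
lemma limit_lower_bound (P : UT) (hP : P ≠ 0) (B : ℝ) (hB : nu P ≤ B) (τ : ℕ → ℝ) (t : ℝ)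
    (ht : 0 < t) (hτ : Filter.Tendsto τ Filter.atTop (nhds t))
    (hz : ∃ᶠ n : ℕ in Filter.atTop, evUT (n : ℝ) (τ n) P = 0) : 1 ≤ B * t := by
  have hq : P.leadingCoeff ≠ 0 := Polynomial.leadingCoeff_ne_zero.2 hP
  refine root_lower_bound P.leadingCoeff hq t ht ?_ B ((le_l1Seminorm nuT P _).trans hB)
  have hcont : ∀ k, Filter.Tendsto (fun n => (P.coeff k).eval₂ (Int.castRingHom ℝ) (τ n))
      Filter.atTop (nhds ((P.coeff k).eval₂ (Int.castRingHom ℝ) t)) := fun k =>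
    ((Polynomial.continuous_eval₂ (P.coeff k) (Int.castRingHom ℝ)).tendsto t).comp hτ
  have hlim : Filter.Tendsto (fun n : ℕ => evUT (n : ℝ) (τ n) P / (n : ℝ) ^ P.natDegree)
      Filter.atTop (nhds (P.leadingCoeff.eval₂ (Int.castRingHom ℝ) t)) := by
    have hsum : (P.leadingCoeff.eval₂ (Int.castRingHom ℝ) t) =
        ∑ k ∈ Finset.range (P.natDegree + 1), if k = P.natDegree then
          (P.coeff k).eval₂ (Int.castRingHom ℝ) t else 0 := by
      rw [Finset.sum_ite_eq' (Finset.range (P.natDegree + 1)) P.natDegree]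
      simp
    have hfun : ∀ n : ℕ, evUT (n : ℝ) (τ n) P / (n : ℝ) ^ P.natDegree =
        ∑ k ∈ Finset.range (P.natDegree + 1),
          (P.coeff k).eval₂ (Int.castRingHom ℝ) (τ n) * ((n : ℝ) ^ k / (n : ℝ) ^ P.natDegree) := by
      intro n
      simp only [evUT, Polynomial.coe_eval₂RingHom]
      rw [Polynomial.eval₂_eq_sum_range, Finset.sum_div]
      exact Finset.sum_congr rfl fun k _ => by simp [mul_div_assoc]
    rw [hsum]
    simp_rw [hfun]
    refine tendsto_finsetSum _ fun k hk => ?_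
    split_ifs with hkd
    · subst hkd
      have h1 : Filter.Tendsto (fun n : ℕ => (n : ℝ) ^ P.natDegree / (n : ℝ) ^ P.natDegree)
          Filter.atTop (nhds 1) := by
        refine tendsto_const_nhds.congr' ?_
        filter_upwards [Filter.eventually_gt_atTop 0] with n hn
        have : (n : ℝ) ≠ 0 := by positivity
        field_simp
      simpa using (hcont P.natDegree).mul h1
    · have hlt : k < P.natDegree := by
        have := Finset.mem_range.1 hk
        omega
      have h1 : Filter.Tendsto (fun n : ℕ => (n : ℝ) ^ k / (n : ℝ) ^ P.natDegree)
          Filter.atTop (nhds 0) :=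
        (tendsto_pow_div_pow_atTop_zero hlt).comp tendsto_natCast_atTop_atTop
      simpa using (hcont k).mul h1
  by_contra hne
  have hev := hlim.eventually_ne hne
  obtain ⟨n, hn0, hn1⟩ := (hz.and_eventually hev).exists
  exact hn1 (by rw [hn0, zero_div])

/-! ### Elimination -/

/-- Rewriting with the relations `xᵢᵈ = u (sᵢ τ - gᵢ(x))`, `deg gᵢ < d`: every monomial `x^α` becomes
a combination over `ℤ[τ][u]` of monomials with all exponents `< d`. Giving `x^γ` the weight `r^|γ|`
with `r` large makes each rewriting step norm-nonincreasing. Modulo `u` a monomial that is not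
already reduced becomes zero. -/
lemma reduce_monomial {m d : ℕ} (hd : 1 ≤ d) (s : Fin m → ℤ) (hs : ∀ i, |s i| ≤ 1)
    (g : Fin m → MvPolynomial (Fin m) ℤ)
    (hg : ∀ i, ∀ η ∈ (g i).support, ∑ j, η j < d) (A : ℝ)
    (hA : ∀ i, ∑ η ∈ (g i).support, |(((g i).coeff η : ℤ) : ℝ)| ≤ A) (hA0 : 0 ≤ A) (N : ℕ) :
    ∀ α : Fin m →₀ ℕ, ∑ j, α j = N → ∃ c : (Fin m → Fin d) → UT,
      (∀ (x : Fin m → ℝ) (u t : ℝ),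
        (∀ i, x i ^ d = u * (s i * t - MvPolynomial.eval x (MvPolynomial.map (Int.castRingHom ℝ)
          (g i)))) →
        ∏ i, x i ^ α i = ∑ γ, evUT u t (c γ) * ∏ i, x i ^ (γ i : ℕ)) ∧
      ∑ γ, nu (c γ) * (A + 1) ^ (∑ i, (γ i : ℕ)) ≤ (A + 1) ^ N ∧
      ∀ γ, (c γ).coeff 0 = if ∀ i, α i = γ i then 1 else 0 := by
  classical
  induction N using Nat.strong_induction_on with
  | _ N ih =>
  intro α hα
  by_cases hred : ∀ i, α i < d
  · set γ₀ : Fin m → Fin d := fun i => ⟨α i, hred i⟩ with hγ₀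
    refine ⟨fun γ => if γ = γ₀ then 1 else 0, ?_, ?_, ?_⟩
    · intro x u t _
      simp [apply_ite (evUT u t), hγ₀]
    · simp [apply_ite nu, nu_one, hγ₀, hα]
    · intro γ
      have : (γ = γ₀) ↔ ∀ i, α i = γ i := by
        rw [funext_iff]
        refine forall_congr' fun i => ?_
        rw [Fin.ext_iff]
        exact eq_comm
      by_cases h : γ = γ₀
      · simp only [if_pos h, if_pos (this.1 h)]; simp
      · simp only [if_neg h, if_neg (fun h' => h (this.2 h'))]; simp
  · push Not at hred
    obtain ⟨i, hi⟩ := hred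
    set α' : Fin m →₀ ℕ := α - Finsupp.single i d with hα'
    have hαα : α = α' + Finsupp.single i d := by
      rw [hα', tsub_add_cancel_of_le]
      exact Finsupp.single_le_iff.2 hi
    have hdeg : ∑ j, α' j + d = N := by
      rw [← hα, hαα]
      simp [Finset.sum_add_distrib, Finsupp.single_apply]
    have hmon : ∀ x : Fin m → ℝ, ∏ j, x j ^ α j = (∏ j, x j ^ α' j) * x i ^ d := by
      intro x
      have : ∏ j, x j ^ (Finsupp.single i d) j = x i ^ d := by
        rw [Finset.prod_eq_single i] <;> simp +contextual [eq_comm]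
      rw [hαα, ← this, ← Finset.prod_mul_distrib]
      exact Finset.prod_congr rfl fun j _ => by rw [Finsupp.add_apply, pow_add]
    obtain ⟨c0, h0a, h0b, -⟩ := ih (∑ j, α' j) (by omega) α' rfl
    have hη : ∀ η : (g i).support, ∃ c : (Fin m → Fin d) → UT,
        (∀ (x : Fin m → ℝ) (u t : ℝ),
          (∀ i, x i ^ d = u * (s i * t - MvPolynomial.eval x (MvPolynomial.map (Int.castRingHom ℝ)
            (g i)))) →
          (∏ j, x j ^ α' j) * ∏ j, x j ^ η.1 j = ∑ γ, evUT u t (c γ) * ∏ i, x i ^ (γ i : ℕ)) ∧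
        ∑ γ, nu (c γ) * (A + 1) ^ (∑ i, (γ i : ℕ)) ≤ (A + 1) ^ (N - 1) := by
      intro η
      have hlt := hg i η.1 η.2
      have hsum : ∑ j, (α' + η.1) j = ∑ j, α' j + ∑ j, η.1 j := by
        simp [Finset.sum_add_distrib]
      obtain ⟨c, ha, hb, -⟩ := ih (∑ j, (α' + η.1) j) (by omega) (α' + η.1) rfl
      refine ⟨c, fun x u t h => ?_, hb.trans ?_⟩
      · rw [← ha x u t h, ← Finset.prod_mul_distrib]
        exact Finset.prod_congr rfl fun j _ => by rw [Finsupp.add_apply, pow_add]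
      · exact pow_le_pow_right₀ (by linarith) (by omega)
    choose c hca hcb using hη
    refine ⟨fun γ => Polynomial.X * ((s i : UT) * Polynomial.C Polynomial.X * c0 γ -
      ∑ η : (g i).support, (((g i).coeff η.1 : ℤ) : UT) * c η γ), ?_, ?_, ?_⟩
    · intro x u t h
      have hX : evUT u t Polynomial.X = u := by simp [evUT]
      have hCX : evUT u t (Polynomial.C Polynomial.X) = t := by simp [evUT]
      have hgi : MvPolynomial.eval x (MvPolynomial.map (Int.castRingHom ℝ) (g i)) =
          ∑ η : (g i).support, (((g i).coeff η.1 : ℤ) : ℝ) * ∏ j, x j ^ η.1 j := by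
        rw [MvPolynomial.eval_map, MvPolynomial.eval₂_eq', ← Finset.sum_coe_sort]
        simp
      rw [hmon, h i, hgi]
      simp only [map_mul, map_sub, map_sum, map_intCast, hX, hCX]
      have e1 : (∏ j, x j ^ α' j) * (u * (s i * t - ∑ η : (g i).support,
          (((g i).coeff η.1 : ℤ) : ℝ) * ∏ j, x j ^ η.1 j)) =
          u * (s i * t * (∏ j, x j ^ α' j) - ∑ η : (g i).support,
          (((g i).coeff η.1 : ℤ) : ℝ) * ((∏ j, x j ^ α' j) * ∏ j, x j ^ η.1 j)) := by
        rw [mul_left_comm, mul_sub, Finset.mul_sum]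
        congr 2
        · ring
        · exact Finset.sum_congr rfl fun _ _ => by ring
      rw [e1]
      simp_rw [hca _ x u t h]
      rw [h0a x u t h]
      simp_rw [Finset.mul_sum]
      rw [Finset.sum_comm, ← Finset.sum_sub_distrib, Finset.mul_sum]
      refine Finset.sum_congr rfl fun γ _ => ?_
      rw [mul_assoc u, sub_mul, Finset.sum_mul]
      congr 2
      · ring
      · exact Finset.sum_congr rfl fun _ _ => by ring
    · have hbd : ∀ γ, nu (Polynomial.X * ((s i : UT) * Polynomial.C Polynomial.X * c0 γ -
          ∑ η : (g i).support, (((g i).coeff η.1 : ℤ) : UT) * c η γ)) ≤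
          nu (c0 γ) + ∑ η : (g i).support, |(((g i).coeff η.1 : ℤ) : ℝ)| * nu (c η γ) := by
        intro γ
        refine (map_mul_le_mul nu _ _).trans ?_
        rw [nu_X, one_mul]
        refine (map_sub_le_add nu _ _).trans ?_
        refine add_le_add ?_ ?_
        · refine (map_mul_le_mul nu _ _).trans ?_
          refine mul_le_of_le_one_left (apply_nonneg _ _) ?_
          refine (map_mul_le_mul nu _ _).trans ?_
          rw [nu_int, nu_CX, mul_one]
          exact_mod_cast hs i
        · refine (Finset.le_sum_of_subadditive nu (map_zero nu).le (map_add_le_add nu) _ _).trans ?_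
          refine Finset.sum_le_sum fun η _ => ?_
          refine (map_mul_le_mul nu _ _).trans ?_
          rw [nu_int]
      have hA1 : (1 : ℝ) ≤ A + 1 := by linarith
      calc _ ≤ ∑ γ, (nu (c0 γ) + ∑ η : (g i).support, |(((g i).coeff η.1 : ℤ) : ℝ)| * nu (c η γ)) *
              (A + 1) ^ (∑ i, (γ i : ℕ)) := by
            refine Finset.sum_le_sum fun γ _ => ?_
            exact mul_le_mul_of_nonneg_right (hbd γ) (by positivity)
        _ = ∑ γ, nu (c0 γ) * (A + 1) ^ (∑ i, (γ i : ℕ)) + ∑ η : (g i).support,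
              |(((g i).coeff η.1 : ℤ) : ℝ)| * ∑ γ, nu (c η γ) * (A + 1) ^ (∑ i, (γ i : ℕ)) := by
            simp_rw [Finset.mul_sum]
            rw [Finset.sum_comm, ← Finset.sum_add_distrib]
            refine Finset.sum_congr rfl fun γ _ => ?_
            rw [add_mul, Finset.sum_mul]
            congr 1
            exact Finset.sum_congr rfl fun _ _ => by ring
        _ ≤ (A + 1) ^ (N - 1) + ∑ η : (g i).support,
              |(((g i).coeff η.1 : ℤ) : ℝ)| * (A + 1) ^ (N - 1) := by
            refine add_le_add (h0b.trans (pow_le_pow_right₀ hA1 (by omega))) ?_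
            exact Finset.sum_le_sum fun η _ => mul_le_mul_of_nonneg_left (hcb η) (abs_nonneg _)
        _ ≤ (A + 1) ^ (N - 1) + A * (A + 1) ^ (N - 1) := by
            rw [← Finset.sum_mul]
            gcongr
            have := hA i
            rwa [← Finset.sum_coe_sort] at this
        _ = (A + 1) ^ N := by
            obtain ⟨k, rfl⟩ : ∃ k, N = k + 1 := ⟨N - 1, by omega⟩
            simp only [Nat.add_sub_cancel]
            ring
    · intro γ
      rw [if_neg]
      · simp
      · intro h
        have := h i
        have := (γ i).2
        omega

/-- A weighted row-sum bound for determinants over `ℤ[τ][u]`: in the Leibniz expansion the weights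
`W` cancel, since every term meets each row and each column once. -/
lemma nu_det_le {ι : Type*} [Fintype ι] [DecidableEq ι] (Q : Matrix ι ι UT) (W : ι → ℝ)
    (hW : ∀ i, 0 < W i) (K : ℝ) (hK : ∀ i, ∑ j, nu (Q i j) * W j ≤ K * W i) :
    nu Q.det ≤ K ^ Fintype.card ι := by
  have hprod : ∀ s : Finset ι, ∀ F : ι → UT, nu (∏ i ∈ s, F i) ≤ ∏ i ∈ s, nu (F i) := by
    intro s F
    induction s using Finset.induction_on with
    | empty => simp [nu_one]
    | insert a s ha ih =>
      rw [Finset.prod_insert ha, Finset.prod_insert ha]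
      exact (map_mul_le_mul nu _ _).trans (mul_le_mul_of_nonneg_left ih (apply_nonneg _ _))
  have hWp : 0 < ∏ i, W i := Finset.prod_pos fun i _ => hW i
  rw [← Matrix.det_transpose, Matrix.det_apply]
  have hterm : ∀ σ : Equiv.Perm ι, nu (Equiv.Perm.sign σ • ∏ i, Q.transpose (σ i) i) ≤
      ∏ i, nu (Q i (σ i)) := by
    intro σ
    refine le_trans ?_ (hprod Finset.univ fun i => Q i (σ i))
    rcases Int.units_eq_one_or (Equiv.Perm.sign σ) with h | h
    · rw [h, one_smul]; rfl
    · rw [h, Units.neg_smul, one_smul, map_neg_eq_map]; rfl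
  refine (Finset.le_sum_of_subadditive nu (map_zero nu).le (map_add_le_add nu) _ _).trans ?_
  refine (Finset.sum_le_sum fun σ _ => hterm σ).trans ?_
  have key : (∑ σ : Equiv.Perm ι, ∏ i, nu (Q i (σ i))) * ∏ i, W i ≤
      K ^ Fintype.card ι * ∏ i, W i := by
    calc (∑ σ : Equiv.Perm ι, ∏ i, nu (Q i (σ i))) * ∏ i, W i
        = ∑ σ : Equiv.Perm ι, ∏ i, (nu (Q i (σ i)) * W (σ i)) := by
          rw [Finset.sum_mul]
          refine Finset.sum_congr rfl fun σ _ => ?_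
          rw [Finset.prod_mul_distrib, Equiv.prod_comp σ W]
      _ ≤ ∑ φ : ι → ι, ∏ i, (nu (Q i (φ i)) * W (φ i)) := by
          let e : Equiv.Perm ι ↪ (ι → ι) := ⟨fun σ => σ, DFunLike.coe_injective⟩
          have := Finset.sum_le_sum_of_subset_of_nonneg (Finset.subset_univ (Finset.univ.map e))
            (f := fun φ : ι → ι => ∏ i, (nu (Q i (φ i)) * W (φ i)))
            (fun φ _ _ => Finset.prod_nonneg fun i _ =>
              mul_nonneg (apply_nonneg _ _) (hW _).le)
          rwa [Finset.sum_map] at this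
      _ = ∏ i, ∑ j, nu (Q i j) * W j := by
          rw [Finset.prod_univ_sum]
          simp
      _ ≤ ∏ i, K * W i :=
          Finset.prod_le_prod (fun i _ => Finset.sum_nonneg fun j _ =>
            mul_nonneg (apply_nonneg _ _) (hW _).le) fun i _ => hK i
      _ = K ^ Fintype.card ι * ∏ i, W i := by
          rw [Finset.prod_mul_distrib, Finset.prod_const, Finset.card_univ]
  exact le_of_mul_le_mul_right key hWp

/-- Elimination of `x` from the system `xᵢᵈ = u (sᵢ τ - gᵢ(x))`, `∑ xᵢ = 1`: the eliminant is the
determinant of multiplication by `∑ xᵢ - 1` on the span of the monomials with exponents `< d`.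
At `u = 0` it is a unit, because there multiplication by `∑ xᵢ` raises degrees. -/
lemma exists_eliminant {m d : ℕ} (hd : 1 ≤ d) (s : Fin m → ℤ) (hs : ∀ i, |s i| ≤ 1)
    (g : Fin m → MvPolynomial (Fin m) ℤ)
    (hg : ∀ i, ∀ η ∈ (g i).support, ∑ j, η j < d) (A : ℝ)
    (hA : ∀ i, ∑ η ∈ (g i).support, |(((g i).coeff η : ℤ) : ℝ)| ≤ A) (hA0 : 0 ≤ A) :
    ∃ P : UT, P ≠ 0 ∧ nu P ≤ (m * (A + 1) + 1) ^ (d ^ m) ∧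
      ∀ (x : Fin m → ℝ) (u t : ℝ),
        (∀ i, x i ^ d = u * (s i * t - MvPolynomial.eval x (MvPolynomial.map (Int.castRingHom ℝ)
          (g i)))) → ∑ i, x i = 1 → evUT u t P = 0 := by
  classical
  have hex := fun α : Fin m →₀ ℕ => reduce_monomial hd s hs g hg A hA hA0 (∑ j, α j) α rfl
  choose c hc1 hc2 hc3 using hex
  -- the exponent vector of `x^β * x_j`
  let up : (Fin m → Fin d) → Fin m → (Fin m →₀ ℕ) := fun β j =>
    Finsupp.equivFunOnFinite.symm (fun i => (β i : ℕ)) + Finsupp.single j 1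
  have hupdeg : ∀ β j, ∑ i, up β j i = ∑ i, (β i : ℕ) + 1 := by
    intro β j
    simp [up, Finset.sum_add_distrib, Finsupp.single_apply]
  let Q : Matrix (Fin m → Fin d) (Fin m → Fin d) UT := fun β γ =>
    ∑ j, c (up β j) γ - if β = γ then 1 else 0
  refine ⟨Q.det, ?_, ?_, ?_⟩
  · intro h0
    have h1 : (Polynomial.constantCoeff.mapMatrix Q).det = 0 := by
      rw [← RingHom.map_det, h0, map_zero]
    obtain ⟨v, hv, hv0⟩ := Matrix.exists_mulVec_eq_zero_iff.2 h1
    obtain ⟨β₁, hβ₁⟩ := Function.ne_iff.1 hv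
    obtain ⟨β, hβ, hmax⟩ := Finset.exists_max_image
      (Finset.univ.filter fun β => v β ≠ 0) (fun β : Fin m → Fin d => ∑ i, (β i : ℕ))
      ⟨β₁, by simpa using hβ₁⟩
    have hβ0 : v β ≠ 0 := by simpa using hβ
    apply hβ0
    have hrow := congrFun hv0 β
    simp only [Matrix.mulVec, dotProduct, Pi.zero_apply, RingHom.mapMatrix_apply,
      Matrix.map_apply] at hrow
    have hterm : ∀ γ, Polynomial.constantCoeff (Q β γ) * v γ = if β = γ then - v γ else 0 := by
      intro γ
      have hq : Polynomial.constantCoeff (Q β γ) * v γ =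
          (∑ j, (c (up β j) γ).coeff 0) * v γ - if β = γ then v γ else 0 := by
        simp only [Q, map_sub, map_sum, Polynomial.constantCoeff_apply, sub_mul]
        congr 1
        split_ifs <;> simp
      have hz : (∑ j, (c (up β j) γ).coeff 0) * v γ = 0 := by
        by_cases hvγ : v γ = 0
        · rw [hvγ, mul_zero]
        · rw [Finset.sum_eq_zero, zero_mul]
          intro j _
          rw [hc3, if_neg]
          intro hup
          have h2 := hmax γ (by simpa using hvγ)
          have h3 := hupdeg β j
          rw [Finset.sum_congr rfl fun i _ => hup i] at h3
          omega
      rw [hq, hz]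
      split_ifs <;> simp
    simp_rw [hterm] at hrow
    simpa using hrow
  · have hcard : Fintype.card (Fin m → Fin d) = d ^ m := by simp
    rw [← hcard]
    refine nu_det_le Q (fun β => (A + 1) ^ (∑ i, (β i : ℕ))) (fun β => by positivity) _ ?_
    intro β
    calc ∑ γ, nu (Q β γ) * (A + 1) ^ (∑ i, (γ i : ℕ))
        ≤ ∑ γ, (∑ j, nu (c (up β j) γ) + if β = γ then 1 else 0) *
            (A + 1) ^ (∑ i, (γ i : ℕ)) := by
          refine Finset.sum_le_sum fun γ _ => mul_le_mul_of_nonneg_right ?_ (by positivity)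
          refine (map_sub_le_add nu _ _).trans (add_le_add ?_ ?_)
          · exact Finset.le_sum_of_subadditive nu (map_zero nu).le (map_add_le_add nu) _ _
          · split_ifs
            · exact nu_one.le
            · exact (map_zero nu).le
      _ = ∑ j, ∑ γ, nu (c (up β j) γ) * (A + 1) ^ (∑ i, (γ i : ℕ)) +
            (A + 1) ^ (∑ i, (β i : ℕ)) := by
          rw [Finset.sum_comm]
          simp_rw [add_mul, Finset.sum_add_distrib, Finset.sum_mul]
          simp
      _ ≤ ∑ _j : Fin m, (A + 1) ^ (∑ i, (β i : ℕ) + 1) + (A + 1) ^ (∑ i, (β i : ℕ)) := by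
          gcongr with j _
          exact (hc2 (up β j)).trans_eq (by rw [hupdeg])
      _ = (m * (A + 1) + 1) * (A + 1) ^ (∑ i, (β i : ℕ)) := by
          simp
          ring
  · intro x u t hx hsum
    have h1 : ((evUT u t).mapMatrix Q).det = 0 := by
      refine Matrix.exists_mulVec_eq_zero_iff.1 ⟨fun γ => ∏ i, x i ^ (γ i : ℕ), ?_, ?_⟩
      · refine Function.ne_iff.2 ⟨fun _ => ⟨0, hd⟩, ?_⟩
        simp
      · funext β
        simp only [Matrix.mulVec, dotProduct, Pi.zero_apply, RingHom.mapMatrix_apply,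
          Matrix.map_apply]
        simp only [Q, map_sub, map_sum, sub_mul, Finset.sum_mul]
        rw [Finset.sum_sub_distrib, Finset.sum_comm]
        have h2 : ∀ j, ∑ γ, evUT u t (c (up β j) γ) * ∏ i, x i ^ (γ i : ℕ) =
            (∏ i, x i ^ (β i : ℕ)) * x j := by
          intro j
          rw [← hc1 (up β j) x u t hx]
          simp only [up, Finsupp.add_apply, Finsupp.equivFunOnFinite_symm_apply_apply, pow_add]
          rw [Finset.prod_mul_distrib]
          congr 1
          rw [Finset.prod_eq_single j] <;> simp +contextual [eq_comm]
        simp_rw [h2]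
        rw [← Finset.mul_sum, hsum]
        simp [apply_ite (evUT u t)]
    rwa [← RingHom.map_det] at h1

/-! ### Lower bound for the minimum on the simplex -/

lemma hasDerivAt_eval_line {m : ℕ} (p : MvPolynomial (Fin m) ℝ) (x v : Fin m → ℝ) :
    HasDerivAt (fun t : ℝ => MvPolynomial.eval (fun i => x i + t * v i) p)
      (∑ i, v i * MvPolynomial.eval x (MvPolynomial.pderiv i p)) 0 := by
  classical
  induction p using MvPolynomial.induction_on with
  | C a => simpa using hasDerivAt_const (0 : ℝ) a
  | add p q hp hq =>
    simpa [mul_add, Finset.sum_add_distrib] using hp.fun_add hq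
  | mul_X p j hp =>
    have h1 : HasDerivAt (fun t : ℝ => x j + t * v j) (v j) 0 := by
      simpa using ((hasDerivAt_id (0 : ℝ)).mul_const (v j)).const_add (x j)
    have h2 := hp.fun_mul h1
    simp only [map_mul, MvPolynomial.eval_X]
    refine h2.congr_deriv ?_
    simp only [zero_mul, add_zero, Derivation.leibniz, smul_eq_mul, map_add, map_mul,
      MvPolynomial.eval_X, MvPolynomial.pderiv_X, mul_add, Finset.sum_add_distrib]
    rw [add_comm, Finset.sum_mul]
    congr 1
    · rw [Finset.sum_eq_single j] <;> simp +contextual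
      · ring
    · exact Finset.sum_congr rfl fun _ _ => by ring

/-- First-order optimality on the simplex: all partial derivatives in the directions of the support
of a minimizer agree. -/
lemma pderiv_eq_of_isMinOn {m : ℕ} (F : MvPolynomial (Fin m) ℝ) (x : Fin m → ℝ)
    (hx : x ∈ stdSimplex ℝ (Fin m))
    (hmin : ∀ y ∈ stdSimplex ℝ (Fin m), MvPolynomial.eval x F ≤ MvPolynomial.eval y F)
    (i j : Fin m) (hi : 0 < x i) (hj : 0 < x j) :
    MvPolynomial.eval x (MvPolynomial.pderiv i F) =
      MvPolynomial.eval x (MvPolynomial.pderiv j F) := by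
  classical
  let v : Fin m → ℝ := fun k => (if k = i then 1 else 0) - if k = j then 1 else 0
  have hder := hasDerivAt_eval_line F x v
  have hloc : IsLocalMin (fun t : ℝ => MvPolynomial.eval (fun k => x k + t * v k) F) 0 := by
    have hnear : ∀ᶠ t : ℝ in nhds 0, |t| < min (x i) (x j) := by
      have : Filter.Tendsto (fun t : ℝ => |t|) (nhds 0) (nhds 0) := by
        simpa using (continuous_abs.tendsto (0 : ℝ))
      exact this.eventually_lt_const (lt_min hi hj)
    filter_upwards [hnear] with t ht
    have hti := abs_lt.1 (ht.trans_le (min_le_left _ _))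
    have htj := abs_lt.1 (ht.trans_le (min_le_right _ _))
    simp only [zero_mul, add_zero]
    refine hmin _ ⟨fun k => ?_, ?_⟩
    · have hk := hx.1 k
      by_cases h1 : k = i <;> by_cases h2 : k = j
      · simp only [v, if_pos h1, if_pos h2]; linarith
      · simp only [v, if_pos h1, if_neg h2]; rw [h1]; linarith
      · simp only [v, if_neg h1, if_pos h2]; rw [h2]; linarith
      · simp only [v, if_neg h1, if_neg h2]; linarith
    · have hs : ∑ k, v k = 0 := by simp [v]
      rw [Finset.sum_add_distrib, ← Finset.mul_sum, hs, hx.2]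
      simp
  have h0 := hloc.hasDerivAt_eq_zero hder
  simp only [v, sub_mul, Finset.sum_sub_distrib, ite_mul, one_mul, zero_mul, Finset.sum_ite_eq',
    Finset.mem_univ, if_true] at h0
  linarith

lemma card_support_le {m D : ℕ} (p : MvPolynomial (Fin m) ℤ)
    (hp : ∀ η ∈ p.support, ∑ j, η j < D) : p.support.card ≤ D ^ m := by
  classical
  have h : p.support.card ≤ (Fintype.piFinset fun _ : Fin m => Finset.range D).card := by
    refine Finset.card_le_card_of_injOn (fun η => (η : Fin m → ℕ)) (fun η hη => ?_)
      (fun a _ b _ h => DFunLike.coe_injective h)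
    simp only [Finset.mem_coe, Fintype.mem_piFinset, Finset.mem_range]
    exact fun j => (Finset.single_le_sum (f := fun j => η j) (fun _ _ => Nat.zero_le _)
      (Finset.mem_univ j)).trans_lt (hp η hη)
  simpa using h

lemma sum_eq_of_isHomogeneous {m d : ℕ} {R : Type*} [CommSemiring R] {f : MvPolynomial (Fin m) R}
    (hf : f.IsHomogeneous d) {α : Fin m →₀ ℕ} (hα : f.coeff α ≠ 0) : ∑ i, α i = d := by
  by_contra h
  exact hα (hf.coeff_eq_zero (by rwa [Finsupp.degree_eq_sum]))

lemma pderiv_bounds {m d : ℕ} {M : ℤ} (hd : 1 ≤ d) (hM : 2 ≤ M)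
    (f : MvPolynomial (Fin m) ℤ) (hf : f.IsHomogeneous d)
    (hbound : ∀ α : Fin m →₀ ℕ, |MvPolynomial.coeff α f| ≤ M) (i : Fin m) :
    (∀ η ∈ (MvPolynomial.pderiv i f).support, ∑ j, η j < d) ∧
      ∑ η ∈ (MvPolynomial.pderiv i f).support,
        |(((MvPolynomial.pderiv i f).coeff η : ℤ) : ℝ)| ≤ d ^ m * (M * d) := by
  have h1 : ∀ η ∈ (MvPolynomial.pderiv i f).support, ∑ j, η j + 1 = d := by
    intro η hη
    rw [MvPolynomial.mem_support_iff, MvPolynomial.coeff_pderiv] at hη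
    have := sum_eq_of_isHomogeneous hf (left_ne_zero_of_mul hη)
    rw [← this]
    simp [Finset.sum_add_distrib, Finsupp.single_apply]
  have h2 : ∀ η ∈ (MvPolynomial.pderiv i f).support, ∑ j, η j < d := fun η hη => by
    have := h1 η hη
    omega
  refine ⟨h2, ?_⟩
  have h3 : ∀ η ∈ (MvPolynomial.pderiv i f).support,
      |(((MvPolynomial.pderiv i f).coeff η : ℤ) : ℝ)| ≤ M * d := by
    intro η hη
    have h4 := (Finset.single_le_sum (f := fun j => η j) (fun _ _ => Nat.zero_le _)
      (Finset.mem_univ i)).trans_lt (h2 η hη)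
    rw [MvPolynomial.coeff_pderiv]
    push_cast
    rw [abs_mul]
    have h5 : |((f.coeff (η + Finsupp.single i 1) : ℤ) : ℝ)| ≤ M := by
      exact_mod_cast hbound _
    have h6 : |((η i : ℝ) + 1)| ≤ d := by
      rw [abs_of_nonneg (by positivity)]
      exact_mod_cast h4
    have h7 : (0 : ℝ) ≤ M := by
      have : (0 : ℤ) ≤ M := by omega
      exact_mod_cast this
    exact mul_le_mul h5 h6 (abs_nonneg _) h7
  refine (Finset.sum_le_card_nsmul _ _ _ h3).trans ?_
  rw [nsmul_eq_mul]
  have h8 : ((MvPolynomial.pderiv i f).support.card : ℝ) ≤ d ^ m := by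
    exact_mod_cast card_support_le _ h2
  have h9 : (0 : ℝ) ≤ M * d := by
    have : (0 : ℤ) ≤ M * d := by positivity
    exact_mod_cast this
  exact mul_le_mul_of_nonneg_right h8 h9

/-- Lower bound for the minimum `μ` on the simplex of a positive integral form. The perturbed forms
`f + ε ∑ xᵢ^(d+1)/(d+1)` have minimizers satisfying `xᵢᵈ = (τ - ∂ᵢf)/ε` on their support, a system
to which `exists_eliminant` applies; as `ε → 0` the multiplier `τ` tends to `d μ`. -/
lemma min_lower_bound {m d : ℕ} {M : ℤ} (hm : 2 ≤ m) (hd : 1 ≤ d) (hM : 2 ≤ M)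
    (f : MvPolynomial (Fin m) ℤ) (hf : f.IsHomogeneous d)
    (hbound : ∀ α : Fin m →₀ ℕ, |MvPolynomial.coeff α f| ≤ M)
    (hpos : ∀ x ∈ stdSimplex ℝ (Fin m),
        0 < MvPolynomial.eval x (MvPolynomial.map (Int.castRingHom ℝ) f)) :
    ∀ x ∈ stdSimplex ℝ (Fin m),
      1 ≤ (m * ((d : ℝ) ^ m * (M * d) + 1) + 1) ^ (d ^ m) *
        (d * MvPolynomial.eval x (MvPolynomial.map (Int.castRingHom ℝ) f)) := by
  classical
  set fR := MvPolynomial.map (Int.castRingHom ℝ) f with hfR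
  have hfRh : fR.IsHomogeneous d := hf.map _
  set B : ℝ := (m * ((d : ℝ) ^ m * (M * d) + 1) + 1) ^ (d ^ m) with hB
  have hM0 : (0 : ℝ) ≤ M := by
    have : (0 : ℤ) ≤ M := by omega
    exact_mod_cast this
  have hB0 : 0 ≤ B := by positivity
  have hne : (stdSimplex ℝ (Fin m)).Nonempty :=
    ⟨_, single_mem_stdSimplex ℝ (⟨0, by omega⟩ : Fin m)⟩
  have hcomp := isCompact_stdSimplex ℝ (Fin m)
  obtain ⟨xs, hxs, hxmin⟩ := hcomp.exists_isMinOn hne (MvPolynomial.continuous_eval fR).continuousOn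
  set μ := MvPolynomial.eval xs fR with hμ
  suffices h : 1 ≤ B * (d * μ) by
    intro x hx
    refine h.trans (mul_le_mul_of_nonneg_left ?_ hB0)
    exact mul_le_mul_of_nonneg_left (hxmin hx) (by positivity)
  -- the perturbations `f + ε ∑ xᵢ^(d+1)/(d+1)`, `ε = 1/n`, and their minimizers
  let F : ℕ → MvPolynomial (Fin m) ℝ := fun n =>
    fR + MvPolynomial.C ((n : ℝ)⁻¹ / (d + 1)) * ∑ i, MvPolynomial.X i ^ (d + 1)
  have hFe : ∀ n x, MvPolynomial.eval x (F n) =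
      MvPolynomial.eval x fR + (n : ℝ)⁻¹ / (d + 1) * ∑ i, x i ^ (d + 1) := by
    intro n x; simp [F]
  have hFd : ∀ n x i, MvPolynomial.eval x (MvPolynomial.pderiv i (F n)) =
      MvPolynomial.eval x (MvPolynomial.pderiv i fR) + (n : ℝ)⁻¹ * x i ^ d := by
    intro n x i
    have h1 : (d : ℝ) + 1 ≠ 0 := by positivity
    have h2 : ∀ j, MvPolynomial.eval x (MvPolynomial.pderiv i
        ((MvPolynomial.X j : MvPolynomial (Fin m) ℝ) ^ (d + 1))) =
        if j = i then (d + 1) * x i ^ d else 0 := by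
      intro j
      rw [MvPolynomial.pderiv_pow, MvPolynomial.pderiv_X]
      by_cases hji : j = i
      · subst hji; simp
      · simp [hji]
    simp only [F, map_add, MvPolynomial.pderiv_C_mul, map_sum, h2,
      Finset.sum_ite_eq', Finset.mem_univ, if_true, map_mul, MvPolynomial.eval_C]
    field_simp
  have hexmin : ∀ n, ∃ x ∈ stdSimplex ℝ (Fin m), ∀ y ∈ stdSimplex ℝ (Fin m),
      MvPolynomial.eval x (F n) ≤ MvPolynomial.eval y (F n) := by
    intro n
    obtain ⟨x, hx, h⟩ := hcomp.exists_isMinOn hne (MvPolynomial.continuous_eval (F n)).continuousOn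
    exact ⟨x, hx, fun y hy => h hy⟩
  choose x hx hxm using hexmin
  have hpow : ∀ y ∈ stdSimplex ℝ (Fin m), 0 ≤ ∑ i, y i ^ (d + 1) ∧ ∑ i, y i ^ (d + 1) ≤ 1 := by
    intro y hy
    refine ⟨Finset.sum_nonneg fun i _ => pow_nonneg (hy.1 i) _, ?_⟩
    rw [← hy.2]
    refine Finset.sum_le_sum fun i _ => ?_
    have h1 : y i ≤ 1 := by
      rw [← hy.2]
      exact Finset.single_le_sum (fun j _ => hy.1 j) (Finset.mem_univ i)
    exact pow_le_of_le_one (hy.1 i) h1 (by omega)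
  let τ : ℕ → ℝ := fun n =>
    d * MvPolynomial.eval (x n) fR + (n : ℝ)⁻¹ * ∑ i, x n i ^ (d + 1)
  have hinv : Filter.Tendsto (fun n : ℕ => (n : ℝ)⁻¹) Filter.atTop (nhds 0) :=
    tendsto_inv_atTop_nhds_zero_nat
  have hval : ∀ n, μ ≤ MvPolynomial.eval (x n) fR ∧
      MvPolynomial.eval (x n) fR ≤ μ + (n : ℝ)⁻¹ := by
    intro n
    refine ⟨hxmin (hx n), ?_⟩
    have h1 := hxm n xs hxs
    rw [hFe, hFe] at h1
    have h2 := hpow _ (hx n)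
    have h3 := hpow _ hxs
    have h4 : (0 : ℝ) ≤ (n : ℝ)⁻¹ / (d + 1) := by positivity
    have h5 : (n : ℝ)⁻¹ / (d + 1) ≤ (n : ℝ)⁻¹ :=
      div_le_self (by positivity) (by linarith [Nat.cast_nonneg (α := ℝ) d])
    nlinarith [mul_nonneg h4 h2.1, mul_le_mul_of_nonneg_left h3.2 h4]
  have hτlim : Filter.Tendsto τ Filter.atTop (nhds (d * μ)) := by
    have h1 : Filter.Tendsto (fun n => MvPolynomial.eval (x n) fR) Filter.atTop (nhds μ) := by
      refine tendsto_of_tendsto_of_tendsto_of_le_of_le tendsto_const_nhds ?_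
        (fun n => (hval n).1) (fun n => (hval n).2)
      simpa using hinv.const_add μ
    have h2 : Filter.Tendsto (fun n : ℕ => (n : ℝ)⁻¹ * ∑ i, x n i ^ (d + 1)) Filter.atTop
        (nhds 0) := by
      refine tendsto_of_tendsto_of_tendsto_of_le_of_le tendsto_const_nhds hinv ?_ ?_
      · exact fun n => mul_nonneg (by positivity) (hpow _ (hx n)).1
      · exact fun n => mul_le_of_le_one_right (by positivity) (hpow _ (hx n)).2
    simpa using (h1.const_mul (d : ℝ)).add h2
  -- Euler's identity identifies the Lagrange multiplier
  have hEuler : ∀ n, ∑ i, x n i * MvPolynomial.eval (x n) (MvPolynomial.pderiv i (F n)) = τ n := by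
    intro n
    have h1 := congrArg (MvPolynomial.eval (x n)) hfRh.sum_X_mul_pderiv
    simp only [map_sum, map_mul, MvPolynomial.eval_X, nsmul_eq_mul, map_natCast] at h1
    simp_rw [hFd, mul_add, Finset.sum_add_distrib]
    rw [h1]
    simp only [τ, Finset.mul_sum]
    congr 1
    exact Finset.sum_congr rfl fun i _ => by ring
  have hcrit : ∀ n i, 0 < x n i →
      MvPolynomial.eval (x n) (MvPolynomial.pderiv i (F n)) = τ n := by
    intro n i hi
    rw [← hEuler n]
    have h1 : ∀ j, x n j * MvPolynomial.eval (x n) (MvPolynomial.pderiv j (F n)) =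
        x n j * MvPolynomial.eval (x n) (MvPolynomial.pderiv i (F n)) := by
      intro j
      rcases ((hx n).1 j).eq_or_lt with h0 | h0
      · rw [← h0, zero_mul, zero_mul]
      · rw [pderiv_eq_of_isMinOn (F n) (x n) (hx n) (hxm n) j i h0 hi]
    simp_rw [h1]
    rw [← Finset.sum_mul, (hx n).2, one_mul]
  -- some support occurs for infinitely many `n`
  obtain ⟨I, hI⟩ : ∃ I : Finset (Fin m), ∃ᶠ n : ℕ in Filter.atTop,
      Finset.univ.filter (fun i => 0 < x n i) = I := by
    by_contra hcon
    simp only [not_exists, Filter.not_frequently] at hcon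
    obtain ⟨n, hn⟩ := (Filter.eventually_all.2 hcon).exists
    exact hn _ rfl
  have hA : ∀ i, (∀ η ∈ (if i ∈ I then MvPolynomial.pderiv i f else 0).support, ∑ j, η j < d) ∧
      ∑ η ∈ (if i ∈ I then MvPolynomial.pderiv i f else 0).support,
        |(((if i ∈ I then MvPolynomial.pderiv i f else 0).coeff η : ℤ) : ℝ)| ≤
          d ^ m * (M * d) := by
    intro i
    by_cases hi : i ∈ I
    · simp only [if_pos hi]
      exact pderiv_bounds hd hM f hf hbound i
    · simp only [if_neg hi, MvPolynomial.support_zero, Finset.sum_empty]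
      exact ⟨by simp, by positivity⟩
  obtain ⟨P, hP0, hPn, hPz⟩ := exists_eliminant hd (fun i => if i ∈ I then 1 else 0)
    (fun i => by split_ifs <;> simp) (fun i => if i ∈ I then MvPolynomial.pderiv i f else 0)
    (fun i => (hA i).1) (d ^ m * (M * d)) (fun i => (hA i).2) (by positivity)
  have hμ0 : 0 < d * μ := mul_pos (by exact_mod_cast hd) (hpos xs hxs)
  refine limit_lower_bound P hP0 B hPn τ (d * μ) hμ0 hτlim ?_
  refine (hI.and_eventually (Filter.eventually_gt_atTop 0)).mono ?_
  rintro n ⟨hn, hn0⟩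
  refine hPz (x n) n (τ n) (fun i => ?_) (hx n).2
  have hiI : i ∈ I ↔ 0 < x n i := by rw [← hn]; simp
  by_cases hi : i ∈ I
  · have h1 := hcrit n i (hiI.1 hi)
    rw [hFd] at h1
    have h2 : MvPolynomial.map (Int.castRingHom ℝ) (MvPolynomial.pderiv i f) =
        MvPolynomial.pderiv i fR := MvPolynomial.pderiv_map.symm
    simp only [if_pos hi, h2, ← h1]
    have hn' : (n : ℝ) ≠ 0 := by positivity
    push_cast
    field_simp
    ring
  · have h0 : x n i = 0 := le_antisymm (not_lt.1 fun h => hi (hiI.2 h)) ((hx n).1 i)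
    simp only [if_neg hi, h0]
    simp [show d ≠ 0 by omega]

/-! ### WDS matrices -/

lemma WDSmat_apply {m : ℕ} (θ : Equiv.Perm (Fin m)) (i j : Fin m) :
    WDSmat θ i j = if θ i ≤ j then 1 / ((j : ℕ) + 1 : ℝ) else 0 := by
  rw [WDSmat, Matrix.mul_apply, Finset.sum_eq_single (θ i)]
  · simp [permMat, Tmat]
  · intro l _ hl
    simp [permMat, hl.symm]
  · simp

lemma WDSmat_nonneg {m : ℕ} (θ : Equiv.Perm (Fin m)) (i j : Fin m) : 0 ≤ WDSmat θ i j := by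
  rw [WDSmat_apply]
  split_ifs <;> positivity

lemma WDSmat_colsum {m : ℕ} (θ : Equiv.Perm (Fin m)) (j : Fin m) : ∑ i, WDSmat θ i j = 1 := by
  simp_rw [WDSmat_apply]
  rw [Equiv.sum_comp θ (fun i => if i ≤ j then 1 / ((j : ℕ) + 1 : ℝ) else 0),
    ← Finset.sum_filter, Finset.sum_const]
  have : (Finset.univ.filter fun i : Fin m => i ≤ j) = Finset.Iic j := by ext; simp
  rw [this, Fin.card_Iic, nsmul_eq_mul]
  push_cast
  have : ((j : ℕ) + 1 : ℝ) ≠ 0 := by positivity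
  field_simp

/-- The row of a WDS matrix coming from the first row of `T_m` is bounded below by `1/m`. -/
lemma WDSmat_row_ge {m : ℕ} (hm : 2 ≤ m) (θ : Equiv.Perm (Fin m)) (j : Fin m) :
    1 / (m : ℝ) ≤ WDSmat θ (θ.symm ⟨0, by omega⟩) j := by
  rw [WDSmat_apply, Equiv.apply_symm_apply, if_pos (Fin.mk_le_of_le_val (Nat.zero_le _))]
  have h : (j : ℕ) + 1 ≤ m := j.2
  have h' : ((j : ℕ) + 1 : ℝ) ≤ m := by exact_mod_cast h
  exact one_div_le_one_div_of_le (by positivity) h'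

/-- Averaging a row vector by a WDS matrix contracts its oscillation by `1 - 1/m`, since all columns
put weight at least `1/m` on one common index. -/
lemma osc_vecMul {m : ℕ} (hm : 2 ≤ m) (θ : Equiv.Perm (Fin m)) (v : Fin m → ℝ) (lo δ : ℝ)
    (hv : ∀ l, lo ≤ v l ∧ v l ≤ lo + δ) :
    ∃ lo', ∀ j, lo' ≤ Matrix.vecMul v (WDSmat θ) j ∧
      Matrix.vecMul v (WDSmat θ) j ≤ lo' + (1 - 1 / (m : ℝ)) * δ := by
  classical
  set l0 := θ.symm ⟨0, by omega⟩
  refine ⟨v l0 / m + (1 - 1 / (m : ℝ)) * lo, fun j => ?_⟩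
  -- remove the common weight `1/m` at `l0`
  let A' : Fin m → ℝ := fun l => WDSmat θ l j - if l = l0 then 1 / (m : ℝ) else 0
  have hA' : ∀ l, 0 ≤ A' l := by
    intro l
    simp only [A']
    split_ifs with h
    · rw [h]
      have := WDSmat_row_ge hm θ j
      linarith
    · simpa using WDSmat_nonneg θ l j
  have hsum : ∑ l, A' l = 1 - 1 / (m : ℝ) := by
    simp [A', Finset.sum_sub_distrib, WDSmat_colsum]
  have hval : Matrix.vecMul v (WDSmat θ) j = v l0 / m + ∑ l, v l * A' l := by
    simp only [Matrix.vecMul, dotProduct, A', mul_sub, Finset.sum_sub_distrib, mul_ite, mul_zero,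
      Finset.sum_ite_eq', Finset.mem_univ, if_true]
    ring
  have h1 : (1 - 1 / (m : ℝ)) * lo ≤ ∑ l, v l * A' l := by
    rw [← hsum, Finset.sum_mul]
    exact Finset.sum_le_sum fun l _ => by nlinarith [(hv l).1, hA' l]
  have h2 : ∑ l, v l * A' l ≤ (1 - 1 / (m : ℝ)) * (lo + δ) := by
    rw [← hsum, Finset.sum_mul]
    exact Finset.sum_le_sum fun l _ => by nlinarith [(hv l).2, hA' l]
  rw [hval]
  constructor
  · linarith
  · linarith

lemma osc_list {m : ℕ} (hm : 2 ≤ m) (L : List (Equiv.Perm (Fin m))) :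
    ∀ (v : Fin m → ℝ) (lo δ : ℝ), (∀ l, lo ≤ v l ∧ v l ≤ lo + δ) →
      ∃ lo', ∀ j, lo' ≤ Matrix.vecMul v (L.map WDSmat).prod j ∧
        Matrix.vecMul v (L.map WDSmat).prod j ≤ lo' + (1 - 1 / (m : ℝ)) ^ L.length * δ := by
  induction L with
  | nil =>
    intro v lo δ hv
    exact ⟨lo, by simpa using hv⟩
  | cons θ L ih =>
    intro v lo δ hv
    obtain ⟨lo1, h1⟩ := osc_vecMul hm θ v lo δ hv
    obtain ⟨lo2, h2⟩ := ih _ lo1 _ h1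
    refine ⟨lo2, fun j => ?_⟩
    rw [List.map_cons, List.prod_cons, ← Matrix.vecMul_vecMul, List.length_cons, pow_succ, mul_assoc]
    exact h2 j

lemma stoch_list {m : ℕ} (L : List (Equiv.Perm (Fin m))) :
    (∀ i j, 0 ≤ (L.map WDSmat).prod i j) ∧ ∀ j, ∑ i, (L.map WDSmat).prod i j = 1 := by
  induction L with
  | nil =>
    refine ⟨fun i j => ?_, fun j => ?_⟩
    · simp only [List.map_nil, List.prod_nil, Matrix.one_apply]
      split_ifs <;> simp
    · simp [Matrix.one_apply]
  | cons θ L ih =>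
    simp only [List.map_cons, List.prod_cons, Matrix.mul_apply]
    refine ⟨fun i j => Finset.sum_nonneg fun l _ => mul_nonneg (WDSmat_nonneg θ i l) (ih.1 l j),
      fun j => ?_⟩
    rw [Finset.sum_comm]
    simp_rw [← Finset.sum_mul, WDSmat_colsum, one_mul]
    exact ih.2 j

lemma WDSprod_eq {m k : ℕ} (θ : Fin k → Equiv.Perm (Fin m)) :
    WDSprod θ = ((List.ofFn θ).map WDSmat).prod := by
  rw [WDSprod, List.map_ofFn]
  rfl

/-- A product of `k` WDS matrices is column stochastic, and all of its columns lie in a small box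
around any one of them. -/
lemma WDSprod_props {m k : ℕ} (hm : 2 ≤ m) (θ : Fin k → Equiv.Perm (Fin m)) (j₀ : Fin m) :
    (fun i => WDSprod θ i j₀) ∈ stdSimplex ℝ (Fin m) ∧
      ∀ i j, |WDSprod θ i j - WDSprod θ i j₀| ≤ (1 - 1 / (m : ℝ)) ^ k := by
  classical
  rw [WDSprod_eq]
  obtain ⟨h1, h2⟩ := stoch_list (List.ofFn θ)
  refine ⟨⟨fun i => h1 i j₀, h2 j₀⟩, fun i j => ?_⟩
  obtain ⟨lo, hlo⟩ := osc_list hm (List.ofFn θ) (Pi.single i 1) 0 1 (fun l => by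
    rw [Pi.single_apply]
    split_ifs <;> simp)
  simp only [Matrix.single_one_vecMul, List.length_ofFn, mul_one, Matrix.row_apply] at hlo
  have ha := hlo j
  have hb := hlo j₀
  rw [abs_le]
  constructor <;> linarith

lemma eval_linSubst {m : ℕ} (B : Matrix (Fin m) (Fin m) ℝ) (f : MvPolynomial (Fin m) ℝ)
    (y : Fin m → ℝ) :
    MvPolynomial.eval y (linSubst B f) = MvPolynomial.eval (B *ᵥ y) f := by
  rw [linSubst, ← MvPolynomial.coe_aeval_eq_eval, RingHom.coe_coe, MvPolynomial.aeval_bind₁,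
    ← MvPolynomial.coe_aeval_eq_eval, RingHom.coe_coe]
  congr 2
  funext i
  simp [Matrix.mulVec, dotProduct]

lemma linSubst_isHomogeneous {m d : ℕ} (B : Matrix (Fin m) (Fin m) ℝ)
    (f : MvPolynomial (Fin m) ℝ) (hf : f.IsHomogeneous d) : (linSubst B f).IsHomogeneous d := by
  have h := hf.aeval (n := 1)
    (fun i => ∑ j, MvPolynomial.C (B i j) * MvPolynomial.X j) (fun i =>
      MvPolynomial.IsHomogeneous.sum _ _ _ fun j _ => (MvPolynomial.isHomogeneous_X ℝ j).C_mul _)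
  rw [one_mul] at h
  exact h

/-- Sorting the coordinates of a point of the simplex in decreasing order exhibits it as the image
of a point of the simplex under a WDS matrix. -/
lemma exists_WDSmat_preimage {m : ℕ} (x : Fin m → ℝ) (hx : x ∈ stdSimplex ℝ (Fin m)) :
    ∃ θ : Equiv.Perm (Fin m), ∃ y ∈ stdSimplex ℝ (Fin m), WDSmat θ *ᵥ y = x := by
  classical
  set σ := Tuple.sort (fun i => - x i) with hσ
  have hmono : Monotone ((fun i => - x i) ∘ σ) := Tuple.monotone_sort _
  let Z : ℕ → ℝ := fun k => if h : k < m then x (σ ⟨k, h⟩) else 0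
  have hZ : ∀ k, Z (k + 1) ≤ Z k := by
    intro k
    simp only [Z]
    by_cases h1 : k + 1 < m
    · rw [dif_pos h1, dif_pos (by omega)]
      have := hmono (show (⟨k, by omega⟩ : Fin m) ≤ ⟨k + 1, h1⟩ from Fin.mk_le_mk.2 (by omega))
      simp only [Function.comp] at this
      linarith
    · rw [dif_neg h1]
      split_ifs
      · exact hx.1 _
      · exact le_rfl
  let y : Fin m → ℝ := fun j => ((j : ℕ) + 1) * (Z j - Z (j + 1))
  have hmul : WDSmat σ.symm *ᵥ y = x := by
    funext i
    have h1 : (WDSmat σ.symm *ᵥ y) i =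
        ∑ j : Fin m, if (σ.symm i : ℕ) ≤ (j : ℕ) then Z j - Z (j + 1) else 0 := by
      simp only [Matrix.mulVec, dotProduct]
      refine Finset.sum_congr rfl fun j _ => ?_
      rw [WDSmat_apply]
      simp only [Fin.le_def]
      split_ifs
      · have : ((j : ℕ) + 1 : ℝ) ≠ 0 := by positivity
        simp only [y]
        field_simp
      · simp
    rw [h1, ← Finset.sum_range (fun j => if (σ.symm i : ℕ) ≤ j then Z j - Z (j + 1) else 0),
      ← Finset.sum_filter]
    have h2 : (Finset.range m).filter (fun j => (σ.symm i : ℕ) ≤ j) =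
        Finset.Ico (σ.symm i : ℕ) m := by
      ext j
      simp only [Finset.mem_filter, Finset.mem_range, Finset.mem_Ico]
      tauto
    rw [h2, Finset.sum_Ico_eq_sub _ (σ.symm i).2.le, Finset.sum_range_sub', Finset.sum_range_sub']
    simp [Z]
  refine ⟨σ.symm, y, ⟨fun j => ?_, ?_⟩, hmul⟩
  · exact mul_nonneg (by positivity) (sub_nonneg.2 (hZ j))
  · have h3 : ∑ i, (WDSmat σ.symm *ᵥ y) i = ∑ j, y j := by
      simp only [Matrix.mulVec, dotProduct]
      rw [Finset.sum_comm]
      simp_rw [← Finset.sum_mul, WDSmat_colsum, one_mul]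
    rw [← h3, hmul, hx.2]

lemma exists_WDSprod_preimage {m : ℕ} (k : ℕ) : ∀ x ∈ stdSimplex ℝ (Fin m),
    ∃ θ : Fin k → Equiv.Perm (Fin m), ∃ y ∈ stdSimplex ℝ (Fin m), WDSprod θ *ᵥ y = x := by
  induction k with
  | zero => exact fun x hx => ⟨Fin.elim0, x, hx, by simp [WDSprod]⟩
  | succ k ih =>
    intro x hx
    obtain ⟨θ₀, x₁, hx₁, h₁⟩ := exists_WDSmat_preimage x hx
    obtain ⟨θ, y, hy, h⟩ := ih x₁ hx₁
    refine ⟨Fin.cons θ₀ θ, y, hy, ?_⟩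
    rw [← h₁, ← h]
    simp [WDSprod, List.ofFn_succ, Matrix.mulVec_mulVec]

/-- A form all of whose coefficients are positive is positive on the simplex. -/
lemma eval_pos_of_coeff_pos {m d : ℕ} (p : MvPolynomial (Fin m) ℝ) (hp : p.IsHomogeneous d)
    (hc : ∀ α : Fin m →₀ ℕ, (∑ i, α i) = d → 0 < MvPolynomial.coeff α p)
    (y : Fin m → ℝ) (hy : y ∈ stdSimplex ℝ (Fin m)) : 0 < MvPolynomial.eval y p := by
  classical
  obtain ⟨j, hj⟩ : ∃ j, 0 < y j := by
    by_contra h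
    push Not at h
    have := Finset.sum_nonpos fun i (_ : i ∈ Finset.univ) => h i
    rw [hy.2] at this
    linarith
  have hjd : 0 < p.coeff (Finsupp.single j d) := hc _ (by simp [Finsupp.single_apply])
  rw [MvPolynomial.eval_eq']
  refine Finset.sum_pos' (fun α hα => ?_) ⟨Finsupp.single j d, ?_, ?_⟩
  · have h1 := sum_eq_of_isHomogeneous hp (MvPolynomial.mem_support_iff.1 hα)
    exact mul_nonneg (hc α h1).le (Finset.prod_nonneg fun i _ => pow_nonneg (hy.1 i) _)
  · exact MvPolynomial.mem_support_iff.2 hjd.ne'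
  · refine mul_pos hjd (Finset.prod_pos fun i _ => ?_)
    by_cases hij : j = i
    · subst hij; simpa using pow_pos hj d
    · simp [hij]

/-! ### Coefficients after substitution -/

/-- The linear form `∑ Xⱼ`. -/
noncomputable def sX (m : ℕ) : MvPolynomial (Fin m) ℝ := ∑ j, MvPolynomial.X j

/-- `0 ≤ a ≤ 1`, and `p` agrees with `a (∑ Xⱼ)^k` up to an error that is dominated coefficientwise by
`δ (2^k - 1) (∑ Xⱼ)^k`. -/
def CloseTo {m : ℕ} (δ a : ℝ) (k : ℕ) (p : MvPolynomial (Fin m) ℝ) : Prop :=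
  0 ≤ a ∧ a ≤ 1 ∧ ∀ κ, |(p - MvPolynomial.C a * sX m ^ k).coeff κ| ≤
    δ * (2 ^ k - 1) * (sX m ^ k).coeff κ

lemma coeff_mul_dom {m : ℕ} {p q P Q : MvPolynomial (Fin m) ℝ}
    (hp : ∀ κ, |p.coeff κ| ≤ P.coeff κ) (hq : ∀ κ, |q.coeff κ| ≤ Q.coeff κ) :
    ∀ κ, |(p * q).coeff κ| ≤ (P * Q).coeff κ := by
  classical
  intro κ
  rw [MvPolynomial.coeff_mul, MvPolynomial.coeff_mul]
  refine (Finset.abs_sum_le_sum_abs _ _).trans (Finset.sum_le_sum fun x _ => ?_)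
  rw [abs_mul]
  exact mul_le_mul (hp _) (hq _) (abs_nonneg _) ((abs_nonneg _).trans (hp _))

lemma sX_pow_coeff_nonneg (m k : ℕ) : ∀ κ, |(sX m ^ k).coeff κ| ≤ (sX m ^ k).coeff κ := by
  classical
  induction k with
  | zero =>
    intro κ
    rw [pow_zero, MvPolynomial.coeff_one]
    split_ifs <;> simp
  | succ k ih =>
    rw [pow_succ]
    refine coeff_mul_dom ih fun κ => (abs_of_nonneg ?_).le
    rw [sX, MvPolynomial.coeff_sum]
    refine Finset.sum_nonneg fun j _ => ?_
    rw [MvPolynomial.coeff_X]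
    split_ifs <;> simp

lemma sX_pow_coeff_pos (m k : ℕ) : ∀ κ : Fin m →₀ ℕ, ∑ i, κ i = k → 0 < (sX m ^ k).coeff κ := by
  classical
  induction k with
  | zero =>
    intro κ hκ
    have : κ = 0 := by
      ext i
      exact (Finset.sum_eq_zero_iff.1 hκ) i (Finset.mem_univ i)
    simp [this]
  | succ k ih =>
    intro κ hκ
    obtain ⟨j, hj⟩ : ∃ j, κ j ≠ 0 := by
      by_contra h
      push Not at h
      simp [h] at hκ
    have hκ' : κ = (κ - Finsupp.single j 1) + Finsupp.single j 1 := by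
      rw [tsub_add_cancel_of_le]
      exact Finsupp.single_le_iff.2 (Nat.one_le_iff_ne_zero.2 hj)
    have hsum : ∑ i, (κ - Finsupp.single j 1 : Fin m →₀ ℕ) i = k := by
      have h1 : ∑ i, κ i = ∑ i, (κ - Finsupp.single j 1 : Fin m →₀ ℕ) i + 1 := by
        conv_lhs => rw [hκ']
        simp only [Finsupp.add_apply, Finset.sum_add_distrib]
        simp [Finsupp.single_apply]
      omega
    rw [pow_succ]
    nth_rewrite 2 [sX]
    rw [Finset.mul_sum, MvPolynomial.coeff_sum]
    refine Finset.sum_pos' (fun i _ => ?_) ⟨j, Finset.mem_univ j, ?_⟩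
    · rw [MvPolynomial.coeff_mul_X']
      split_ifs
      · exact (abs_nonneg _).trans (sX_pow_coeff_nonneg m k _)
      · exact le_rfl
    · rw [hκ', MvPolynomial.coeff_mul_X]
      exact ih _ hsum

lemma CloseTo.mul {m : ℕ} {δ a b : ℝ} {k l : ℕ} {p q : MvPolynomial (Fin m) ℝ} (hδ : 0 ≤ δ)
    (hδ1 : δ ≤ 1) (hp : CloseTo δ a k p) (hq : CloseTo δ b l q) :
    CloseTo δ (a * b) (k + l) (p * q) := by
  obtain ⟨ha0, ha1, hp⟩ := hp
  obtain ⟨hb0, hb1, hq⟩ := hq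
  refine ⟨mul_nonneg ha0 hb0, mul_le_one₀ ha1 hb0 hb1, fun κ => ?_⟩
  set ep := p - MvPolynomial.C a * sX m ^ k with hep
  set eQ := q - MvPolynomial.C b * sX m ^ l with heQ
  have hpq : p * q - MvPolynomial.C (a * b) * sX m ^ (k + l) =
      MvPolynomial.C a * (sX m ^ k * eQ) + MvPolynomial.C b * (ep * sX m ^ l) + ep * eQ := by
    rw [hep, heQ, map_mul, pow_add]
    ring
  have hp' : ∀ κ, |ep.coeff κ| ≤ (MvPolynomial.C (δ * (2 ^ k - 1)) * sX m ^ k).coeff κ := by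
    intro κ; rw [MvPolynomial.coeff_C_mul]; exact hp κ
  have hq' : ∀ κ, |eQ.coeff κ| ≤ (MvPolynomial.C (δ * (2 ^ l - 1)) * sX m ^ l).coeff κ := by
    intro κ; rw [MvPolynomial.coeff_C_mul]; exact hq κ
  have h1 := coeff_mul_dom (sX_pow_coeff_nonneg m k) hq' κ
  have h2 := coeff_mul_dom hp' (sX_pow_coeff_nonneg m l) κ
  have h3 := coeff_mul_dom hp' hq' κ
  rw [show sX m ^ k * (MvPolynomial.C (δ * (2 ^ l - 1)) * sX m ^ l) =
    MvPolynomial.C (δ * (2 ^ l - 1)) * sX m ^ (k + l) by rw [pow_add]; ring,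
    MvPolynomial.coeff_C_mul] at h1
  rw [show MvPolynomial.C (δ * (2 ^ k - 1)) * sX m ^ k * sX m ^ l =
    MvPolynomial.C (δ * (2 ^ k - 1)) * sX m ^ (k + l) by rw [pow_add]; ring,
    MvPolynomial.coeff_C_mul] at h2
  rw [show MvPolynomial.C (δ * (2 ^ k - 1)) * sX m ^ k *
      (MvPolynomial.C (δ * (2 ^ l - 1)) * sX m ^ l) =
    MvPolynomial.C (δ * (2 ^ k - 1) * (δ * (2 ^ l - 1))) * sX m ^ (k + l) by
      rw [pow_add, MvPolynomial.C_mul (a := δ * (2 ^ k - 1)) (a' := δ * (2 ^ l - 1))]; ring,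
    MvPolynomial.coeff_C_mul] at h3
  rw [hpq]
  simp only [MvPolynomial.coeff_add, MvPolynomial.coeff_C_mul]
  set S := (sX m ^ (k + l)).coeff κ
  have hS : 0 ≤ S := (abs_nonneg _).trans (sX_pow_coeff_nonneg m (k + l) κ)
  have hx : (0 : ℝ) ≤ 2 ^ k - 1 := by linarith [one_le_pow₀ (M₀ := ℝ) (n := k) one_le_two]
  have hy : (0 : ℝ) ≤ 2 ^ l - 1 := by linarith [one_le_pow₀ (M₀ := ℝ) (n := l) one_le_two]
  refine (abs_add_le _ _).trans ((add_le_add_left (abs_add_le _ _) _).trans ?_)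
  rw [abs_mul, abs_mul, abs_of_nonneg ha0, abs_of_nonneg hb0]
  have g1 : a * |(sX m ^ k * eQ).coeff κ| ≤ δ * (2 ^ l - 1) * S :=
    (mul_le_of_le_one_left (abs_nonneg _) ha1).trans h1
  have g2 : b * |(ep * sX m ^ l).coeff κ| ≤ δ * (2 ^ k - 1) * S :=
    (mul_le_of_le_one_left (abs_nonneg _) hb1).trans h2
  have g3 : |(ep * eQ).coeff κ| ≤ δ * ((2 ^ k - 1) * (2 ^ l - 1)) * S := by
    refine h3.trans (mul_le_mul_of_nonneg_right ?_ hS)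
    have : 0 ≤ δ * ((2 ^ k - 1) * (2 ^ l - 1)) := by positivity
    nlinarith
  calc _ ≤ δ * (2 ^ l - 1) * S + δ * (2 ^ k - 1) * S + δ * ((2 ^ k - 1) * (2 ^ l - 1)) * S := by
        linarith
    _ = δ * (2 ^ (k + l) - 1) * S := by rw [pow_add]; ring

lemma CloseTo.one {m : ℕ} {δ : ℝ} : CloseTo δ 1 0 (1 : MvPolynomial (Fin m) ℝ) := by
  refine ⟨zero_le_one, le_rfl, fun κ => ?_⟩
  simp

lemma CloseTo.pow {m : ℕ} {δ a : ℝ} {p : MvPolynomial (Fin m) ℝ} (hδ : 0 ≤ δ)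
    (hδ1 : δ ≤ 1) (hp : CloseTo δ a 1 p) (n : ℕ) : CloseTo δ (a ^ n) n (p ^ n) := by
  induction n with
  | zero => simpa using CloseTo.one
  | succ n ih =>
    rw [pow_succ, pow_succ]
    exact ih.mul hδ hδ1 hp

lemma CloseTo.prod {m : ℕ} {δ : ℝ} {a : Fin m → ℝ} {p : Fin m → MvPolynomial (Fin m) ℝ}
    (hδ : 0 ≤ δ) (hδ1 : δ ≤ 1) (hp : ∀ i, CloseTo δ (a i) 1 (p i)) (α : Fin m → ℕ)
    (s : Finset (Fin m)) :
    CloseTo δ (∏ i ∈ s, a i ^ α i) (∑ i ∈ s, α i) (∏ i ∈ s, p i ^ α i) := by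
  classical
  induction s using Finset.induction_on with
  | empty => simpa using CloseTo.one
  | insert j s hj ih =>
    rw [Finset.prod_insert hj, Finset.prod_insert hj, Finset.sum_insert hj]
    exact ((hp j).pow hδ hδ1 (α j)).mul hδ hδ1 ih

/-- If the columns of the substitution matrix are within `δ` of a point `b` of the simplex, then
the coefficients of `f(Bx)` are within a relative error of order `δ` of those of
`f(b) (∑ Xⱼ)^d`. -/
lemma coeff_linSubst_pos {m d : ℕ} {M : ℤ} (f : MvPolynomial (Fin m) ℤ) (hf : f.IsHomogeneous d)
    (hbound : ∀ α : Fin m →₀ ℕ, |MvPolynomial.coeff α f| ≤ M)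
    (B : Matrix (Fin m) (Fin m) ℝ) (b : Fin m → ℝ) (hb : b ∈ stdSimplex ℝ (Fin m)) (δ : ℝ)
    (hδ : 0 ≤ δ) (hδ1 : δ ≤ 1) (hB : ∀ i j, |B i j - b i| ≤ δ)
    (hlt : ((d : ℝ) + 1) ^ m * M * 2 ^ d * δ <
      MvPolynomial.eval b (MvPolynomial.map (Int.castRingHom ℝ) f))
    (κ : Fin m →₀ ℕ) (hκ : ∑ i, κ i = d) :
    0 < MvPolynomial.coeff κ (linSubst B (MvPolynomial.map (Int.castRingHom ℝ) f)) := by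
  classical
  have hb1 : ∀ i, b i ≤ 1 := fun i => by
    rw [← hb.2]
    exact Finset.single_le_sum (fun j _ => hb.1 j) (Finset.mem_univ i)
  let L : Fin m → MvPolynomial (Fin m) ℝ := fun i =>
    ∑ j, MvPolynomial.C (B i j) * MvPolynomial.X j
  have hL : ∀ i, CloseTo δ (b i) 1 (L i) := by
    intro i
    refine ⟨hb.1 i, hb1 i, fun κ => ?_⟩
    have h1 : L i - MvPolynomial.C (b i) * sX m ^ 1 =
        ∑ j, MvPolynomial.C (B i j - b i) * MvPolynomial.X j := by
      simp only [L, sX, pow_one, Finset.mul_sum, ← Finset.sum_sub_distrib, map_sub, sub_mul]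
    rw [h1, pow_one, pow_one, sX, MvPolynomial.coeff_sum, MvPolynomial.coeff_sum, Finset.mul_sum]
    refine (Finset.abs_sum_le_sum_abs _ _).trans (Finset.sum_le_sum fun j _ => ?_)
    rw [MvPolynomial.coeff_C_mul, MvPolynomial.coeff_X, abs_mul]
    have := hB i j
    split_ifs
    · norm_num
      linarith
    · simp
  set S := (sX m ^ d).coeff κ with hS
  have hSpos : 0 < S := sX_pow_coeff_pos m d κ hκ
  have hexp : linSubst B (MvPolynomial.map (Int.castRingHom ℝ) f) =
      ∑ α ∈ f.support, MvPolynomial.C ((f.coeff α : ℤ) : ℝ) * ∏ i, L i ^ α i := by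
    rw [linSubst, MvPolynomial.bind₁, MvPolynomial.aeval_def, MvPolynomial.eval₂_map,
      MvPolynomial.eval₂_eq']
    simp [L, MvPolynomial.algebraMap_eq]
  have hev : MvPolynomial.eval b (MvPolynomial.map (Int.castRingHom ℝ) f) =
      ∑ α ∈ f.support, ((f.coeff α : ℤ) : ℝ) * ∏ i, b i ^ α i := by
    rw [MvPolynomial.eval_map, MvPolynomial.eval₂_eq']
    simp
  have hM0 : (0 : ℝ) ≤ M := by
    have := (abs_nonneg _).trans (hbound 0)
    exact_mod_cast this
  have hterm : ∀ α ∈ f.support, ((f.coeff α : ℤ) : ℝ) * (∏ i, b i ^ α i) * S - M * 2 ^ d * δ * S ≤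
      (MvPolynomial.C ((f.coeff α : ℤ) : ℝ) * ∏ i, L i ^ α i).coeff κ := by
    intro α hα
    have hαd : ∑ i, α i = d := sum_eq_of_isHomogeneous hf (MvPolynomial.mem_support_iff.1 hα)
    have h1 := (CloseTo.prod hδ hδ1 hL α Finset.univ).2.2 κ
    rw [hαd, MvPolynomial.coeff_sub, MvPolynomial.coeff_C_mul] at h1
    rw [MvPolynomial.coeff_C_mul]
    set e := (∏ i, L i ^ α i).coeff κ - (∏ i, b i ^ α i) * S with he
    have h2 : |((f.coeff α : ℤ) : ℝ)| ≤ M := by exact_mod_cast hbound α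
    have h3 : |((f.coeff α : ℤ) : ℝ) * e| ≤ M * (2 ^ d * δ * S) := by
      rw [abs_mul]
      refine mul_le_mul h2 (h1.trans ?_) (abs_nonneg _) hM0
      have : 0 ≤ δ * S := by positivity
      nlinarith
    have h4 := (abs_le.1 h3).1
    have h5 : (∏ i, L i ^ α i).coeff κ = (∏ i, b i ^ α i) * S + e := by rw [he]; ring
    rw [h5]
    linarith
  have hcard : (f.support.card : ℝ) ≤ ((d : ℝ) + 1) ^ m := by
    have := card_support_le (D := d + 1) f (fun η hη => by
      have := sum_eq_of_isHomogeneous hf (MvPolynomial.mem_support_iff.1 hη)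
      omega)
    exact_mod_cast this
  rw [hexp, MvPolynomial.coeff_sum]
  refine lt_of_lt_of_le ?_ (Finset.sum_le_sum hterm)
  rw [Finset.sum_sub_distrib, ← Finset.sum_mul, ← hev, Finset.sum_const, nsmul_eq_mul]
  have h6 : (f.support.card : ℝ) * (M * 2 ^ d * δ * S) ≤
      ((d : ℝ) + 1) ^ m * (M * 2 ^ d * δ * S) :=
    mul_le_mul_of_nonneg_right hcard (by positivity)
  nlinarith [mul_lt_mul_of_pos_right hlt hSpos]

/-! ### Numerical comparison with `C_p(M, m, d)` and conclusion -/

/-- The base of the determinant bound, compared with the factors occurring in `C_p(M, m, d)`. -/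
lemma base_le {m d : ℕ} {M : ℤ} (hm : 2 ≤ m) (hd : 1 ≤ d) (hM : 2 ≤ M) :
    (m * ((d : ℝ) ^ m * (M * d) + 1) + 1 : ℝ) ≤ 2 * M * (m : ℝ) ^ d * (d : ℝ) ^ m := by
  have hm' : (2 : ℝ) ≤ m := by exact_mod_cast hm
  have hM' : (2 : ℝ) ≤ M := by exact_mod_cast hM
  have hd' : (1 : ℝ) ≤ d := by exact_mod_cast hd
  have h1 : (d : ℝ) * m ≤ (m : ℝ) ^ d := by
    obtain ⟨e, rfl⟩ : ∃ e, d = e + 1 := ⟨d - 1, by omega⟩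
    rw [pow_succ]
    have h2 : e + 1 ≤ m ^ e :=
      (Nat.succ_le_of_lt e.lt_two_pow_self).trans (Nat.pow_le_pow_left hm e)
    have h3 : ((e + 1 : ℕ) : ℝ) ≤ (m : ℝ) ^ e := by exact_mod_cast h2
    exact mul_le_mul_of_nonneg_right h3 (by positivity)
  have h4 : (1 : ℝ) ≤ (d : ℝ) ^ m := one_le_pow₀ hd'
  have h5 : (m : ℝ) ≤ (m : ℝ) ^ d := le_trans (by nlinarith) h1
  set P := (d : ℝ) ^ m
  set Q := (m : ℝ) ^ d
  have hMP : 2 ≤ M * P := by nlinarith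
  have h6 : M * P * (d * m) ≤ M * P * Q := mul_le_mul_of_nonneg_left h1 (by linarith)
  have h7 : 2 * (m : ℝ) ≤ M * P * Q := mul_le_mul hMP h5 (by linarith) (by linarith)
  nlinarith

/-- The precision needed for positivity of the coefficients, in terms of the argument of the
logarithm in `C_p(M, m, d)`. -/
lemma precision_le {m d : ℕ} {M : ℤ} (hm : 2 ≤ m) (hd : 1 ≤ d) (hM : 2 ≤ M) :
    ((d : ℝ) + 1) ^ m * M * 2 ^ d *
        ((m * ((d : ℝ) ^ m * (M * d) + 1) + 1) ^ (d ^ m) * d) ≤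
      (2 : ℝ) ^ (d ^ m) * (M : ℝ) ^ (d ^ m + 1) *
        (m : ℝ) ^ (d ^ (m + 1) + d) * (d : ℝ) ^ ((m + 1) * d + m * d ^ m) *
        ((d : ℝ) + 1) ^ ((m - 1) * (m + 2)) := by
  have hm' : (2 : ℝ) ≤ m := by exact_mod_cast hm
  have hM' : (2 : ℝ) ≤ M := by exact_mod_cast hM
  have hM0 : (0 : ℝ) ≤ M := by linarith
  have hd' : (1 : ℝ) ≤ d := by exact_mod_cast hd
  have h1 : ((m : ℝ) * ((d : ℝ) ^ m * (M * d) + 1) + 1) ^ (d ^ m) ≤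
      (2 * M * (m : ℝ) ^ d * (d : ℝ) ^ m) ^ (d ^ m) :=
    pow_le_pow_left₀ (by positivity) (base_le hm hd hM) _
  have h2 : ((d : ℝ) + 1) ^ m ≤ ((d : ℝ) + 1) ^ ((m - 1) * (m + 2)) := by
    refine pow_le_pow_right₀ (by linarith) ?_
    obtain ⟨e, rfl⟩ : ∃ e, m = e + 2 := ⟨m - 2, by omega⟩
    rw [show e + 2 - 1 = e + 1 by omega]
    nlinarith
  have h3 : (2 : ℝ) ^ d ≤ (m : ℝ) ^ d := pow_le_pow_left₀ (by norm_num) hm' _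
  have h4 : (d : ℝ) ≤ (d : ℝ) ^ ((m + 1) * d) :=
    le_self_pow₀ hd' (by positivity)
  calc _ ≤ ((d : ℝ) + 1) ^ ((m - 1) * (m + 2)) * M * (m : ℝ) ^ d *
        ((2 * M * (m : ℝ) ^ d * (d : ℝ) ^ m) ^ (d ^ m) * (d : ℝ) ^ ((m + 1) * d)) := by
        gcongr
    _ = _ := by
        rw [mul_pow, mul_pow, mul_pow, ← pow_mul, ← pow_mul, pow_succ (M : ℝ), pow_add (m : ℝ),
          pow_add (d : ℝ), pow_succ d m, mul_comm (d ^ m) d]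
        ring

/-- If `Z (1 - 1/m)^k < 1`, where `Z` is the argument of the logarithm in `C_p(M, m, d)`, then `k`
substitutions make all coefficients of a form positive on the simplex positive. -/
lemma coeff_pos_of_lt_one {m d : ℕ} {M : ℤ} (hm : 2 ≤ m) (hd : 1 ≤ d) (hM : 2 ≤ M)
    (f : MvPolynomial (Fin m) ℤ) (hf : f.IsHomogeneous d)
    (hbound : ∀ α : Fin m →₀ ℕ, |MvPolynomial.coeff α f| ≤ M)
    (hpos : ∀ x ∈ stdSimplex ℝ (Fin m),
        0 < MvPolynomial.eval x (MvPolynomial.map (Int.castRingHom ℝ) f))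
    (k : ℕ)
    (hk : (2 : ℝ) ^ (d ^ m) * (M : ℝ) ^ (d ^ m + 1) *
        (m : ℝ) ^ (d ^ (m + 1) + d) * (d : ℝ) ^ ((m + 1) * d + m * d ^ m) *
        ((d : ℝ) + 1) ^ ((m - 1) * (m + 2)) * (1 - 1 / (m : ℝ)) ^ k < 1)
    (θ : Fin k → Equiv.Perm (Fin m)) (α : Fin m →₀ ℕ) (hα : (∑ i, α i) = d) :
    0 < MvPolynomial.coeff α
      (linSubst (WDSprod θ) (MvPolynomial.map (Int.castRingHom ℝ) f)) := by
  have hm' : (2 : ℝ) ≤ m := by exact_mod_cast hm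
  have hM' : (2 : ℝ) ≤ M := by exact_mod_cast hM
  have hd' : (1 : ℝ) ≤ d := by exact_mod_cast hd
  have hratio0 : 0 ≤ (1 - 1 / (m : ℝ)) := by
    have : 1 / (m : ℝ) ≤ 1 := by
      rw [div_le_one (by linarith)]
      linarith
    linarith
  have hratio1 : (1 - 1 / (m : ℝ)) ≤ 1 := by
    have : 0 ≤ 1 / (m : ℝ) := by positivity
    linarith
  have hprec := precision_le hm hd hM
  obtain ⟨hb, hB⟩ := WDSprod_props hm θ ⟨0, by omega⟩
  have hmin := min_lower_bound hm hd hM f hf hbound hpos _ hb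
  have hδ0 := pow_nonneg hratio0 k
  have hδ1 := pow_le_one₀ (n := k) hratio0 hratio1
  generalize (1 - 1 / (m : ℝ)) ^ k = δ at *
  refine coeff_linSubst_pos f hf hbound (WDSprod θ) _ hb δ hδ0 hδ1 hB ?_ α hα
  have hQ : 0 < (m * ((d : ℝ) ^ m * (M * d) + 1) + 1 : ℝ) ^ (d ^ m) * d := by
    have : (0 : ℝ) < M := by linarith
    positivity
  generalize (m * ((d : ℝ) ^ m * (M * d) + 1) + 1 : ℝ) ^ (d ^ m) = Q at *
  refine lt_of_mul_lt_mul_right (a := Q * d) ?_ hQ.le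
  have h1 := (mul_le_mul_of_nonneg_right hprec hδ0).trans_lt hk
  linarith

/-- **Completeness of the WDS method with an explicit bound.** Let `f` be a nonzero
integral homogeneous polynomial of degree `d ≥ 1` in `m ≥ 2` variables whose coefficients
have absolute value at most `M` (an integer `≥ 2`). Then `f` is positive on the standard
simplex iff for some `k ≤ C_p(M,m,d)` every form in the `k`-th WDS set of `f` has complete
monomials with all positive coefficients, where
`C_p(M,m,d) = ⌊ln(2^(d^m) M^(d^m+1) m^(d^(m+1)+d) d^((m+1)d+m d^m) (d+1)^((m-1)(m+2))) /
(ln m - ln(m-1))⌋ + 2`. -/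
theorem wds_complete_with_bound (m d : ℕ) (M : ℤ) (hm : 2 ≤ m) (hd : 1 ≤ d) (hM : 2 ≤ M)
    (f : MvPolynomial (Fin m) ℤ) (hf0 : f ≠ 0) (hf : f.IsHomogeneous d)
    (hbound : ∀ α : Fin m →₀ ℕ, |MvPolynomial.coeff α f| ≤ M) :
    (∀ x ∈ stdSimplex ℝ (Fin m),
        0 < MvPolynomial.eval x (MvPolynomial.map (Int.castRingHom ℝ) f)) ↔
      ∃ k : ℕ,
        (k : ℤ) ≤
          ⌊Real.log ((2 : ℝ) ^ (d ^ m) * (M : ℝ) ^ (d ^ m + 1) *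
                (m : ℝ) ^ (d ^ (m + 1) + d) * (d : ℝ) ^ ((m + 1) * d + m * d ^ m) *
                ((d : ℝ) + 1) ^ ((m - 1) * (m + 2))) /
              (Real.log m - Real.log (m - 1))⌋ + 2 ∧
        ∀ θ : Fin k → Equiv.Perm (Fin m), ∀ α : Fin m →₀ ℕ, (∑ i, α i) = d →
          0 < MvPolynomial.coeff α
                (linSubst (WDSprod θ) (MvPolynomial.map (Int.castRingHom ℝ) f)) := by
  classical
  have hm' : (2 : ℝ) ≤ m := by exact_mod_cast hm
  have hM' : (2 : ℝ) ≤ M := by exact_mod_cast hM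
  have hd' : (1 : ℝ) ≤ d := by exact_mod_cast hd
  constructor
  · intro hpos
    set Z : ℝ := (2 : ℝ) ^ (d ^ m) * (M : ℝ) ^ (d ^ m + 1) *
      (m : ℝ) ^ (d ^ (m + 1) + d) * (d : ℝ) ^ ((m + 1) * d + m * d ^ m) *
      ((d : ℝ) + 1) ^ ((m - 1) * (m + 2)) with hZ
    have hZ1 : 1 ≤ Z := by
      rw [hZ]
      have e1 : (1 : ℝ) ≤ (2 : ℝ) ^ (d ^ m) := one_le_pow₀ (by norm_num)
      have e2 : (1 : ℝ) ≤ (M : ℝ) ^ (d ^ m + 1) := one_le_pow₀ (by linarith)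
      have e3 : (1 : ℝ) ≤ (m : ℝ) ^ (d ^ (m + 1) + d) := one_le_pow₀ (by linarith)
      have e4 : (1 : ℝ) ≤ (d : ℝ) ^ ((m + 1) * d + m * d ^ m) := one_le_pow₀ hd'
      have e5 : (1 : ℝ) ≤ ((d : ℝ) + 1) ^ ((m - 1) * (m + 2)) := one_le_pow₀ (by linarith)
      exact one_le_mul_of_one_le_of_one_le (one_le_mul_of_one_le_of_one_le
        (one_le_mul_of_one_le_of_one_le (one_le_mul_of_one_le_of_one_le e1 e2) e3) e4) e5
    have hlog : 0 < Real.log m - Real.log (m - 1) :=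
      sub_pos.2 (Real.log_lt_log (by linarith) (by linarith))
    set X := Real.log Z / (Real.log m - Real.log (m - 1)) with hX
    have hX0 : 0 ≤ X := div_nonneg (Real.log_nonneg hZ1) hlog.le
    have hfl : (⌊X⌋.toNat : ℤ) = ⌊X⌋ := Int.toNat_of_nonneg (Int.floor_nonneg.2 hX0)
    refine ⟨⌊X⌋.toNat + 1, by push_cast; omega, fun θ α hα => ?_⟩
    refine coeff_pos_of_lt_one hm hd hM f hf hbound hpos _ ?_ θ α hα
    rw [← hZ]
    clear θ
    generalize hk : ⌊X⌋.toNat + 1 = k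
    have hXk : X < k := by
      have h1 := Int.lt_floor_add_one X
      rw [← hfl] at h1
      rw [← hk]
      exact_mod_cast h1
    have hratio : (1 - 1 / (m : ℝ)) = (m - 1) / m := by field_simp
    have hratio0 : 0 < (1 - 1 / (m : ℝ)) := by
      rw [hratio]
      exact div_pos (by linarith) (by linarith)
    -- `k` exceeds `X`, which is the exponent at which `(1 - 1/m)^X = 1/Z`
    have hδ0 : 0 < (1 - 1 / (m : ℝ)) ^ k := pow_pos hratio0 k
    have hZ0 : 0 < Z := by linarith
    rw [← Real.log_neg_iff (mul_pos hZ0 hδ0), Real.log_mul hZ0.ne' hδ0.ne',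
      Real.log_pow, hratio, Real.log_div (by linarith) (by linarith)]
    rw [hX, div_lt_iff₀ hlog] at hXk
    linarith
  · rintro ⟨k, -, hk⟩ x hx
    obtain ⟨θ, y, hy, rfl⟩ := exists_WDSprod_preimage k x hx
    rw [← eval_linSubst]
    exact eval_pos_of_coeff_pos _ (linSubst_isHomogeneous _ _ (hf.map _)) (hk θ) y hy
end
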